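/- arXiv:2410.18885 — 3 statements merged into one kernel-verified Lean document; each statement's English description precedes it below -/
import Mathlib

section
/- Let G = (V,E) be a finite simple graph, let φ > 0 be a real number, and let X ⊆ V be a nonempty set that is φ-vertex-expanding in G. Then there exists a Steiner tree spanning X in G whose maximum degree is at most 6/φ + 3. -/
/-- `X` is `φ`-vertex-expanding in the subgraph of `G` induced on the ground
set `A`: for every vertex cut `(L, S, R)` of `G[A]`,
`|S| ≥ φ · min{|X ∩ (L∪S)|, |X ∩ (R∪S)|}`. -/
def IsVertexExpandingOn {V : Type*} (G : SimpleGraph V) (A X : Set V) (φ : ℝ) : Prop :=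
  ∀ L S R : Set V, L ∪ S ∪ R = A →
    Disjoint L S → Disjoint L R → Disjoint S R →
    L.Nonempty → R.Nonempty →
    (∀ u ∈ L, ∀ v ∈ R, ¬ G.Adj u v) →
    φ * min ((X ∩ (L ∪ S)).ncard : ℝ) ((X ∩ (R ∪ S)).ncard : ℝ) ≤ (S.ncard : ℝ)

/-!
Put `m = ⌊2/φ⌋ + 1` and `k = m + 2`. Among the subgraphs of `G` that connect `X`, let `T` be one
whose total degree excess over `k` is least and which, subject to this, is minimal under inclusion.
Suppose some degree of `T` exceeds `k`.

Call a vertex set slack if it meets `T` in a connected piece of degrees at most `k` and any one of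
its vertices can be brought below degree `k` by rerouting `T` inside the set. A vertex of `T` of
degree less than `k` is slack. If `G` has an edge between two disjoint slack sets, that edge can be
added to `T`. It closes a cycle with the path of `T` between the two sets, so any edge of the path
can be dropped and the degree of any inner vertex lowered. Local optimality forbids this at a vertex
of degree more than `k`, and elsewhere it frees the vertices of the path, so that the two sets and
the path merge into one slack set. Hence, in a coarsest partition into slack sets and singletons,
the set `W` of the vertices of `T` that are in no slack class has only vertices of degree at least
`k`, contains all those of degree more than `k`, and separates in `G` whatever vertices of `T` it
separates in `T`.

The leaves of `T` are in `X`, so removing `W` from `T` leaves more than `m |W|` components that meet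
`X`. Take one vertex of `X` from each and group the components of `G - W` into two sides with about
half of these vertices each. This is a vertex cut with separator `W`, so `φ (m |W|) ≤ 2 |W|` by
expansion, against `m > 2/φ`.
-/

namespace SteinerTree

open SimpleGraph

section Reachability

variable {V : Type*} {H S T : SimpleGraph V} {C D : Set V} {a b u v : V}

/-- `T` connects `X` if all vertices of `X` lie in one component of `T`, which may have to leave
`X`. -/
def Connects (T : SimpleGraph V) (X : Set V) : Prop := ∀ a ∈ X, ∀ b ∈ X, T.Reachable a b

lemma reachable_of_forall_mem_edges (P : T.Walk a b)
    (h : ∀ x y, s(x, y) ∈ P.edges → H.Reachable x y) : H.Reachable a b := by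
  induction P with
  | nil => rfl
  | cons _ _ ih =>
    simp only [Walk.edges_cons, List.mem_cons] at h
    exact (h _ _ (Or.inl rfl)).trans (ih fun x y hxy => h x y (Or.inr hxy))

lemma reachable_of_forall_adj (h : ∀ x y, T.Adj x y → H.Reachable x y) (hab : T.Reachable a b) :
    H.Reachable a b :=
  let ⟨P⟩ := hab
  reachable_of_forall_mem_edges P fun x y hxy => h x y (P.adj_of_mem_edges hxy)

lemma reachable_of_isTrail {P : T.Walk a b} (hP : P.IsTrail) (huv : s(u, v) ∈ P.edges)
    (hother : ∀ x y, s(x, y) ∈ P.edges → s(x, y) ≠ s(u, v) → H.Reachable x y)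
    (hab : H.Reachable a b) : H.Reachable u v := by
  induction P with
  | nil => simp only [Walk.edges_nil, List.not_mem_nil] at huv
  | @cons a c b hadj Q ih =>
    rw [Walk.isTrail_cons] at hP
    simp only [Walk.edges_cons, List.mem_cons] at huv hother
    by_cases hQ : s(u, v) ∈ Q.edges
    · have hac : H.Reachable a c := hother a c (Or.inl rfl) fun h => hP.2 (h ▸ hQ)
      exact ih hP.1 hQ (fun x y hxy => hother x y (Or.inr hxy)) (hac.symm.trans hab)
    · have hcb : H.Reachable c b := reachable_of_forall_mem_edges Q fun x y hxy =>
        hother x y (Or.inr hxy) fun h => hQ (h ▸ hxy)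
      have hac : H.Reachable a c := hab.trans hcb.symm
      rcases Sym2.eq_iff.1 (huv.resolve_right hQ) with ⟨rfl, rfl⟩ | ⟨rfl, rfl⟩
      exacts [hac, hac.symm]

/-- The edges of `T` inside `C`, as a graph on the whole vertex type so that the restrictions to
different sets can be compared. -/
def restrict (T : SimpleGraph V) (C : Set V) : SimpleGraph V := (T.induce C).spanningCoe

lemma restrict_adj : (restrict T C).Adj a b ↔ T.Adj a b ∧ a ∈ C ∧ b ∈ C := by
  simp [restrict]

lemma restrict_le (T : SimpleGraph V) (C : Set V) : restrict T C ≤ T := T.spanningCoe_induce_le C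

lemma restrict_mono (hST : S ≤ T) (hCD : C ⊆ D) : restrict S C ≤ restrict T D :=
  fun _ _ h =>
    have ⟨hadj, ha, hb⟩ := restrict_adj.1 h
    restrict_adj.2 ⟨hST hadj, hCD ha, hCD hb⟩

lemma reachable_restrict_of_walk (P : T.Walk a b) (hP : ∀ v ∈ P.support, v ∈ C) :
    (restrict T C).Reachable a b :=
  (P.induce C hP).reachable.map (Embedding.spanningCoe _).toHom

end Reachability

section Degree

variable {V : Type*} {S T : SimpleGraph V} {v x y : V}

/-- The degree of `v` in `T`, as an `ncard` so that it needs no decidability. -/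
noncomputable def deg (T : SimpleGraph V) (v : V) : ℕ := (T.neighborSet v).ncard

lemma mem_support_of_deg_pos (h : 0 < deg T v) : v ∈ T.support :=
  Set.nonempty_of_ncard_ne_zero h.ne'

lemma deg_eq_zero_of_notMem_support (h : v ∉ T.support) : deg T v = 0 := by
  by_contra h0
  exact h (mem_support_of_deg_pos (Nat.pos_of_ne_zero h0))

lemma deg_sup_edge_of_ne (hx : v ≠ x) (hy : v ≠ y) : deg (T ⊔ edge x y) v = deg T v := by
  have : (T ⊔ edge x y).neighborSet v = T.neighborSet v := by
    ext w
    simp [edge_adj, hx, hy]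
  rw [deg, this, deg]

variable [Finite V]

lemma deg_le_deg (h : ∀ w, S.Adj v w → T.Adj v w) : deg S v ≤ deg T v :=
  Set.ncard_le_ncard h

lemma deg_mono (h : S ≤ T) : deg S v ≤ deg T v := deg_le_deg fun _ hw => h hw

lemma deg_lt_deg {u w : V} (h : S ≤ T) (hT : T.Adj u w) (hS : ¬ S.Adj u w) : deg S u < deg T u :=
  Set.ncard_lt_ncard (Set.ssubset_iff_exists.2 ⟨fun _ hw => h hw, w, hT, hS⟩)

lemma deg_sup_edge_le (T : SimpleGraph V) (x y v : V) : deg (T ⊔ edge x y) v ≤ deg T v + 1 := by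
  classical
  refine (Set.ncard_le_ncard (t := insert (if v = x then y else x) (T.neighborSet v)) ?_).trans
    (Set.ncard_insert_le _ _)
  intro w hw
  rcases hw with hw | hw
  · exact Or.inr hw
  · grind

end Degree

section Rerouting

variable {V : Type*} {G H S T : SimpleGraph V} {C U : Set V} {k : ℕ} {a b u v x y : V}

/-- `H` is obtained from `T` by local surgery: inside `U`, edges of `T` may be traded for paths of
`H` in `U`, no edge outside `U` changes, and no degree is pushed above `k`. -/
structure IsRerouting (G : SimpleGraph V) (k : ℕ) (U : Set V) (T H : SimpleGraph V) : Prop where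
  le : H ≤ G
  adj_iff : ∀ ⦃a b⦄, ¬ (a ∈ U ∧ b ∈ U) → (H.Adj a b ↔ T.Adj a b)
  reachable_of_adj : ∀ ⦃a b⦄, T.Adj a b → a ∈ U → b ∈ U → (restrict H U).Reachable a b
  deg_le : ∀ v, deg H v ≤ max k (deg T v)

namespace IsRerouting

lemma refl (h : T ≤ G) : IsRerouting G k U T T :=
  ⟨h, fun _ _ _ => Iff.rfl, fun _ _ hab ha hb => (restrict_adj.2 ⟨hab, ha, hb⟩).reachable,
    fun _ => le_max_right _ _⟩

lemma reachable_restrict (h : IsRerouting G k U T H) (hab : (restrict T U).Reachable a b) :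
    (restrict H U).Reachable a b :=
  reachable_of_forall_adj (fun _ _ hxy =>
    have ⟨hadj, hx, hy⟩ := restrict_adj.1 hxy
    h.reachable_of_adj hadj hx hy) hab

lemma reachable (h : IsRerouting G k U T H) (hab : T.Reachable a b) : H.Reachable a b := by
  refine reachable_of_forall_adj (fun x y hxy => ?_) hab
  by_cases hU : x ∈ U ∧ y ∈ U
  · exact (h.reachable_of_adj hxy hU.1 hU.2).mono (restrict_le H U)
  · exact ((h.adj_iff hU).2 hxy).reachable

lemma mono (h : IsRerouting G k C T H) (hCU : C ⊆ U) : IsRerouting G k U T H where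
  le := h.le
  adj_iff a b hab := h.adj_iff fun ⟨ha, hb⟩ => hab ⟨hCU ha, hCU hb⟩
  reachable_of_adj a b hab ha hb := by
    by_cases hC : a ∈ C ∧ b ∈ C
    · exact (h.reachable_of_adj hab hC.1 hC.2).mono (restrict_mono le_rfl hCU)
    · exact (restrict_adj.2 ⟨(h.adj_iff hC).2 hab, ha, hb⟩).reachable
  deg_le := h.deg_le

lemma trans (h₁ : IsRerouting G k U S T) (h₂ : IsRerouting G k U T H) : IsRerouting G k U S H where
  le := h₂.le
  adj_iff _ _ hab := (h₂.adj_iff hab).trans (h₁.adj_iff hab)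
  reachable_of_adj _ _ hab ha hb := h₂.reachable_restrict (h₁.reachable_of_adj hab ha hb)
  deg_le v := (h₂.deg_le v).trans (max_le (le_max_left _ _) (h₁.deg_le v))

variable [Finite V]

lemma sup_edge (hTG : T ≤ G) (hxy : G.Adj x y) (hx : x ∈ U) (hy : y ∈ U) (hdx : deg T x < k)
    (hdy : deg T y < k) : IsRerouting G k U T (T ⊔ edge x y) where
  le := sup_le hTG ((edge_le_iff _).2 (Or.inr hxy))
  adj_iff a b hab := by
    simp only [sup_adj, or_iff_left_iff_imp, edge_adj]
    rintro ⟨⟨rfl, rfl⟩ | ⟨rfl, rfl⟩, -⟩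
    exacts [absurd ⟨hx, hy⟩ hab, absurd ⟨hy, hx⟩ hab]
  reachable_of_adj _ _ hab ha hb := (restrict_adj.2 ⟨Or.inl hab, ha, hb⟩).reachable
  deg_le v := by
    by_cases hv : v = x ∨ v = y
    · have := deg_sup_edge_le T x y v
      have : deg T v < k := by rcases hv with rfl | rfl <;> assumption
      omega
    · rw [not_or] at hv
      exact (deg_sup_edge_of_ne hv.1 hv.2).le.trans (le_max_right _ _)

lemma of_deleteEdges (h : IsRerouting G k U (T.deleteEdges {s(x, y)}) H) (hx : x ∈ U) (hy : y ∈ U)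
    (hxy : (restrict H U).Reachable x y) : IsRerouting G k U T H where
  le := h.le
  adj_iff a b hab := by
    rw [h.adj_iff hab, deleteEdges_adj, and_iff_left_iff_imp]
    rintro - he
    rcases Sym2.eq_iff.1 he with ⟨rfl, rfl⟩ | ⟨rfl, rfl⟩
    exacts [hab ⟨hx, hy⟩, hab ⟨hy, hx⟩]
  reachable_of_adj a b hab ha hb := by
    by_cases he : s(a, b) = s(x, y)
    · rcases Sym2.eq_iff.1 he with ⟨rfl, rfl⟩ | ⟨rfl, rfl⟩
      exacts [hxy, hxy.symm]
    · exact h.reachable_of_adj ((deleteEdges_adj).2 ⟨hab, he⟩) ha hb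
  deg_le v := (h.deg_le v).trans (max_le_max le_rfl (deg_mono (deleteEdges_le _)))

end IsRerouting

/-- The graph that coincides with `H` inside `C` and with `S` elsewhere. -/
def graft (S H : SimpleGraph V) (C : Set V) : SimpleGraph V := S \ restrict S C ⊔ restrict H C

lemma graft_adj :
    (graft S H C).Adj a b ↔ (S.Adj a b ∧ ¬ (a ∈ C ∧ b ∈ C)) ∨ (H.Adj a b ∧ a ∈ C ∧ b ∈ C) := by
  simp only [graft, sup_adj, sdiff_adj, restrict_adj]
  tauto

lemma graft_adj_of_notMem (h : ¬ (a ∈ C ∧ b ∈ C)) : (graft S H C).Adj a b ↔ S.Adj a b := by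
  rw [graft_adj]
  tauto

lemma restrict_graft : restrict (graft S H C) C = restrict H C := by
  ext a b
  simp only [restrict_adj, graft_adj]
  tauto

lemma deg_graft_le_of_notMem [Finite V] (hv : v ∉ C) : deg (graft S H C) v ≤ deg S v :=
  deg_le_deg fun _ => (graft_adj_of_notMem fun h => hv h.1).1

lemma IsRerouting.adj_of_graft_adj (h : IsRerouting G k C T H)
    (hST : ∀ a ∈ C, ∀ b, S.Adj a b → T.Adj a b) (ha : a ∈ C) (hab : (graft S H C).Adj a b) :
    H.Adj a b := by
  rcases graft_adj.1 hab with ⟨hS, hC⟩ | ⟨hH, -⟩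
  · exact (h.adj_iff hC).2 (hST a ha b hS)
  · exact hH

lemma IsRerouting.graft [Finite V] (h : IsRerouting G k C T H) (hSG : S ≤ G)
    (hST : ∀ a ∈ C, ∀ b, S.Adj a b → T.Adj a b) (hdeg : ∀ v ∈ C, deg T v ≤ k) :
    IsRerouting G k C S (graft S H C) where
  le a b hab := (graft_adj.1 hab).elim (fun hS => hSG hS.1) fun hH => h.le hH.1
  adj_iff _ _ := graft_adj_of_notMem
  reachable_of_adj a b hab ha hb := by
    rw [restrict_graft]
    exact h.reachable_of_adj (hST a ha b hab) ha hb
  deg_le v := by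
    by_cases hv : v ∈ C
    · have : deg (SteinerTree.graft S H C) v ≤ deg H v :=
        deg_le_deg fun w => h.adj_of_graft_adj hST hv
      exact le_max_of_le_left (this.trans ((h.deg_le v).trans (max_le le_rfl (hdeg v hv))))
    · exact le_max_of_le_right (deg_graft_le_of_notMem hv)

end Rerouting

section Slack

variable {V : Type*} {G H S T : SimpleGraph V} {C D U : Set V} {k : ℕ} {c d u v x y : V}

/-- A vertex `u` is freeable in `C` if a rerouting inside `C` leaves it with degree less than `k`
and connected to `T`, so that a new edge at `u` can be attached to `T`. -/
def IsFreeable (G : SimpleGraph V) (k : ℕ) (T : SimpleGraph V) (C : Set V) (u : V) : Prop :=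
  ∃ H, IsRerouting G k C T H ∧ deg H u < k ∧ ∃ c ∈ C ∩ T.support, (restrict H C).Reachable u c

lemma IsFreeable.mono (h : IsFreeable G k T C u) (hCU : C ⊆ U) : IsFreeable G k T U u := by
  obtain ⟨H, hH, hdeg, c, hc, hreach⟩ := h
  exact ⟨H, hH.mono hCU, hdeg, c, ⟨hCU hc.1, hc.2⟩, hreach.mono (restrict_mono le_rfl hCU)⟩

/-- A set `C` is slack if it meets `T` in a connected piece of degrees at most `k` and all its
vertices are freeable in `C`, one at a time. -/
structure IsSlack (G : SimpleGraph V) (k : ℕ) (T : SimpleGraph V) (C : Set V) : Prop where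
  inter_nonempty : (C ∩ T.support).Nonempty
  connects : Connects (restrict T C) (C ∩ T.support)
  deg_le : ∀ v ∈ C, deg T v ≤ k
  isFreeable : ∀ u ∈ C, IsFreeable G k T C u

namespace IsSlack

lemma singleton (hTG : T ≤ G) (hv : v ∈ T.support) (hdeg : deg T v < k) : IsSlack G k T {v} where
  inter_nonempty := ⟨v, rfl, hv⟩
  connects := by
    rintro a ⟨rfl, -⟩ b ⟨rfl, -⟩
    rfl
  deg_le := by
    rintro a rfl
    exact hdeg.le
  isFreeable := by
    rintro u rfl
    exact ⟨T, .refl hTG, hdeg, u, ⟨rfl, hv⟩, Reachable.refl _⟩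

lemma exists_rerouting_reachable (h : IsSlack G k T C) (hu : u ∈ C) (hc : c ∈ C ∩ T.support) :
    ∃ H, IsRerouting G k C T H ∧ deg H u < k ∧ (restrict H C).Reachable u c := by
  obtain ⟨H, hH, hdeg, c', hc', hreach⟩ := h.isFreeable u hu
  exact ⟨H, hH, hdeg, hreach.trans (hH.reachable_restrict (h.connects c' hc' c hc))⟩

variable [Finite V]

lemma exists_rerouting_join (hC : IsSlack G k T C) (hD : IsSlack G k T D) (hCD : Disjoint C D)
    (hx : x ∈ C) (hy : y ∈ D) (hxy : G.Adj x y) (hc : c ∈ C ∩ T.support)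
    (hd : d ∈ D ∩ T.support) (hCU : C ⊆ U) (hDU : D ⊆ U) (hST : S ≤ T) (hSG : S ≤ G) :
    ∃ H, IsRerouting G k U S H ∧ (restrict H U).Reachable c d ∧
      ∀ v, v ∉ C → v ∉ D → deg H v ≤ deg S v := by
  obtain ⟨H₁, hH₁, hdeg₁, hxc⟩ := hC.exists_rerouting_reachable hx hc
  obtain ⟨H₂, hH₂, hdeg₂, hyd⟩ := hD.exists_rerouting_reachable hy hd
  have hST₁ : ∀ a ∈ C, ∀ b, S.Adj a b → T.Adj a b := fun a _ b hab => hST hab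
  set M₁ := graft S H₁ C
  have hM₁ : IsRerouting G k C S M₁ := hH₁.graft hSG hST₁ hC.deg_le
  have hST₂ : ∀ a ∈ D, ∀ b, M₁.Adj a b → T.Adj a b := fun a ha b hab =>
    hST ((graft_adj_of_notMem fun h => hCD.notMem_of_mem_left h.1 ha).1 hab)
  set M₂ := graft M₁ H₂ D
  have hM₂ : IsRerouting G k D M₁ M₂ := hH₂.graft hM₁.le hST₂ hD.deg_le
  have hdx : deg M₂ x < k :=
    ((deg_graft_le_of_notMem (hCD.notMem_of_mem_left hx)).trans
      (deg_le_deg fun _ => hH₁.adj_of_graft_adj hST₁ hx)).trans_lt hdeg₁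
  have hdy : deg M₂ y < k := (deg_le_deg fun _ => hH₂.adj_of_graft_adj hST₂ hy).trans_lt hdeg₂
  have hcx : (restrict M₂ U).Reachable c x := by
    rw [← restrict_graft (S := S)] at hxc
    exact (hM₂.mono hDU).reachable_restrict (hxc.symm.mono (restrict_mono le_rfl hCU))
  have hyd : (restrict M₂ U).Reachable y d := by
    rw [← restrict_graft (S := M₁)] at hyd
    exact hyd.mono (restrict_mono le_rfl hDU)
  have hle : restrict M₂ U ≤ restrict (M₂ ⊔ edge x y) U := restrict_mono le_sup_left le_rfl
  have hadj : (restrict (M₂ ⊔ edge x y) U).Adj x y :=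
    restrict_adj.2 ⟨Or.inr ((edge_adj ..).2 ⟨Or.inl ⟨rfl, rfl⟩, hxy.ne⟩), hCU hx, hDU hy⟩
  refine ⟨M₂ ⊔ edge x y, ((hM₁.mono hCU).trans (hM₂.mono hDU)).trans
    (.sup_edge hM₂.le hxy (hCU hx) (hDU hy) hdx hdy),
    (hcx.mono hle).trans (hadj.reachable.trans (hyd.mono hle)), fun v hvC hvD => ?_⟩
  rw [deg_sup_edge_of_ne (ne_of_mem_of_not_mem hx hvC).symm (ne_of_mem_of_not_mem hy hvD).symm]
  exact (deg_graft_le_of_notMem hvD).trans (deg_graft_le_of_notMem hvC)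

/-- The exchange step: an edge between two clusters closes a cycle with the path of `T` joining
them, on which any edge may then be dropped. -/
lemma exists_rerouting_deg_lt (hTG : T ≤ G) (hC : IsSlack G k T C) (hD : IsSlack G k T D)
    (hCD : Disjoint C D) (hx : x ∈ C) (hy : y ∈ D) (hxy : G.Adj x y) (hc : c ∈ C ∩ T.support)
    (hd : d ∈ D ∩ T.support) (hCU : C ⊆ U) (hDU : D ⊆ U) {P : T.Walk c d} (hP : P.IsPath)
    (hPU : ∀ v ∈ P.support, v ∈ U) (hu : u ∈ P.support) (huC : u ∉ C) (huD : u ∉ D) :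
    ∃ H, IsRerouting G k U T H ∧ deg H u < deg T u := by
  have hcd : c ≠ d := fun h => hCD.notMem_of_mem_left hc.1 (h ▸ hd.1)
  obtain ⟨e, he, hue⟩ :=
    (Walk.mem_support_iff_exists_mem_edges_of_not_nil (Walk.not_nil_of_ne hcd)).1 hu
  obtain ⟨w, rfl⟩ := Sym2.mem_iff_exists.1 hue
  have hle := T.deleteEdges_le {s(u, w)}
  obtain ⟨H, hH, hreach, hdeg⟩ := hC.exists_rerouting_join hD hCD hx hy hxy hc hd hCU hDU hle
    (hle.trans hTG)
  have huw : (restrict H U).Reachable u w := by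
    refine reachable_of_isTrail hP.isTrail he (fun a b hab hne => ?_) hreach
    exact hH.reachable_of_adj ((deleteEdges_adj).2 ⟨P.adj_of_mem_edges hab, hne⟩)
      (hPU a (P.fst_mem_support_of_mem_edges hab)) (hPU b (P.snd_mem_support_of_mem_edges hab))
  refine ⟨H, hH.of_deleteEdges (hPU u hu) (hPU w (P.snd_mem_support_of_mem_edges he)) huw, ?_⟩
  exact (hdeg u huC huD).trans_lt (deg_lt_deg hle (P.adj_of_mem_edges he) (by simp))

protected lemma insert {z : V} (hC : IsSlack G k T C) (hk : 2 ≤ k) (hz : z ∉ T.support)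
    (hzC : z ∉ C) (hy : y ∈ C) (hzy : G.Adj z y) : IsSlack G k T (insert z C) := by
  have hsub : C ⊆ insert z C := Set.subset_insert z C
  have hinter : insert z C ∩ T.support = C ∩ T.support := Set.insert_inter_of_notMem hz
  have hdz : deg T z = 0 := deg_eq_zero_of_notMem_support hz
  have hfree : IsFreeable G k T (insert z C) z := by
    obtain ⟨H, hH, hdy, c, hc, hyc⟩ := hC.isFreeable y hy
    have hdHz : deg H z ≤ deg T z := deg_le_deg fun w => (hH.adj_iff fun h => hzC h.1).1
    have hadj : (restrict (H ⊔ edge z y) (insert z C)).Adj z y :=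
      restrict_adj.2 ⟨Or.inr ((edge_adj ..).2 ⟨Or.inl ⟨rfl, rfl⟩, hzy.ne⟩),
        Set.mem_insert z C, hsub hy⟩
    refine ⟨H ⊔ edge z y, (hH.mono hsub).trans
      (.sup_edge hH.le hzy (Set.mem_insert z C) (hsub hy) (by omega) hdy), ?_, c,
      ⟨hsub hc.1, hc.2⟩, hadj.reachable.trans (hyc.mono (restrict_mono le_sup_left hsub))⟩
    have := deg_sup_edge_le H z y z
    omega
  constructor
  · exact hinter ▸ hC.inter_nonempty
  · rw [hinter]
    exact fun a ha b hb => (hC.connects a ha b hb).mono (restrict_mono le_rfl hsub)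
  · rintro v (rfl | hv)
    exacts [hdz.trans_le (Nat.zero_le k), hC.deg_le v hv]
  · rintro u (rfl | hu)
    exacts [hfree, (hC.isFreeable u hu).mono hsub]

end IsSlack

end Slack

section Clusters

variable {V : Type*} {G T : SimpleGraph V} {U : Set V} {k : ℕ} {r : Setoid V} {a b c d v x y z : V}

/-- The class of `v` in the partition of the vertices given by `r`. -/
def cluster (r : Setoid V) (v : V) : Set V := {w | r v w}

lemma mem_cluster_self (r : Setoid V) (v : V) : v ∈ cluster r v := r.refl v

lemma cluster_eq (h : r a b) : cluster r a = cluster r b := by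
  ext w
  exact ⟨r.trans (r.symm h), r.trans h⟩

lemma disjoint_cluster (h : ¬ r a b) : Disjoint (cluster r a) (cluster r b) :=
  Set.disjoint_left.2 fun _ ha hb => h (r.trans ha (r.symm hb))

/-- The partition obtained from `r` by merging all clusters contained in `U`. -/
def collapse (r : Setoid V) (U : Set V) (hU : ∀ v ∈ U, cluster r v ⊆ U) : Setoid V where
  r a b := r a b ∨ (a ∈ U ∧ b ∈ U)
  iseqv :=
    { refl := fun a => Or.inl (r.refl a)
      symm := Or.imp r.symm And.symm
      trans := by
        rintro a b c (hab | hab) (hbc | hbc)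
        · exact Or.inl (r.trans hab hbc)
        · exact Or.inr ⟨hU b hbc.1 (r.symm hab), hbc.2⟩
        · exact Or.inr ⟨hab.1, hU b hab.2 hbc⟩
        · exact Or.inr ⟨hab.1, hbc.2⟩ }

lemma cluster_collapse_of_mem (hU : ∀ v ∈ U, cluster r v ⊆ U) (hv : v ∈ U) :
    cluster (collapse r U hU) v = U := by
  ext w
  exact ⟨fun h => h.elim (fun hw => hU v hv hw) And.right, fun hw => Or.inr ⟨hv, hw⟩⟩

lemma cluster_collapse_of_notMem (hU : ∀ v ∈ U, cluster r v ⊆ U) (hv : v ∉ U) :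
    cluster (collapse r U hU) v = cluster r v := by
  ext w
  exact ⟨fun h => h.resolve_right fun h => hv h.1, Or.inl⟩

/-- A partition of the vertices whose clusters are slack, except for some singletons. -/
def IsSlackPartition (G : SimpleGraph V) (k : ℕ) (T : SimpleGraph V) (r : Setoid V) : Prop :=
  ∀ v, IsSlack G k T (cluster r v) ∨ cluster r v = {v}

lemma exists_maximal_isSlackPartition [Finite V] (G : SimpleGraph V) (k : ℕ) (T : SimpleGraph V) :
    ∃ r, Maximal (IsSlackPartition G k T) r := by
  have : Finite (Setoid V) := .of_injective (fun r : Setoid V => r.r) fun r s h =>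
    Setoid.ext fun a b => (congrFun₂ h a b).to_iff
  have hbot : IsSlackPartition G k T ⊥ := fun v => Or.inr (by ext w; exact eq_comm)
  exact (Set.toFinite {r | IsSlackPartition G k T r}).exists_maximal ⟨⊥, hbot⟩

lemma IsSlack.rel_of_maximal (hr : Maximal (IsSlackPartition G k T) r) (hU : IsSlack G k T U)
    (hsat : ∀ v ∈ U, cluster r v ⊆ U) (ha : a ∈ U) (hb : b ∈ U) : r a b := by
  have hcollapse : IsSlackPartition G k T (collapse r U hsat) := fun v => by
    by_cases hv : v ∈ U
    · exact Or.inl ((cluster_collapse_of_mem hsat hv).symm ▸ hU)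
    · rw [cluster_collapse_of_notMem hsat hv]
      exact hr.prop v
  exact hr.le_of_ge hcollapse (fun _ _ h => Or.inl h) (Or.inr ⟨ha, hb⟩)

/-- The union of the clusters visited by `P`. -/
def visited (r : Setoid V) (P : T.Walk c d) : Set V := {v | ∃ p ∈ P.support, r p v}

lemma subset_visited {P : T.Walk c d} {p : V} (hp : p ∈ P.support) :
    cluster r p ⊆ visited r P := fun _ hv => ⟨p, hp, hv⟩

lemma cluster_subset_visited {P : T.Walk c d} (hv : v ∈ visited r P) :
    cluster r v ⊆ visited r P := by
  obtain ⟨p, hp, hpv⟩ := hv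
  exact cluster_eq hpv ▸ subset_visited hp

lemma IsSlackPartition.isSlack_visited (hr : IsSlackPartition G k T r) {P : T.Walk c d}
    (hPT : ∀ p ∈ P.support, p ∈ T.support)
    (hP : ∀ p ∈ P.support, ¬ IsSlack G k T (cluster r p) →
      deg T p ≤ k ∧ IsFreeable G k T (visited r P) p) : IsSlack G k T (visited r P) := by
  have hself : ∀ p ∈ P.support, p ∈ visited r P := fun p hp =>
    subset_visited hp (mem_cluster_self r p)
  have hon : ∀ v ∈ visited r P, ¬ IsSlack G k T (cluster r v) → v ∈ P.support := by
    rintro v ⟨p, hp, hpv⟩ hv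
    have : p ∈ ({v} : Set V) := (hr v).resolve_left hv ▸ r.symm hpv
    exact this ▸ hp
  have hreach : ∀ a ∈ visited r P ∩ T.support, (restrict T (visited r P)).Reachable c a := by
    classical
    rintro a ⟨⟨p, hp, hpa⟩, haT⟩
    refine (reachable_restrict_of_walk (P.takeUntil p hp) fun v hv =>
      hself v (P.support_takeUntil_subset_support hp hv)).trans ?_
    rcases hr p with hslack | hsingle
    · exact (hslack.connects p ⟨mem_cluster_self r p, hPT p hp⟩ a ⟨hpa, haT⟩).mono
        (restrict_mono le_rfl (subset_visited hp))
    · have : a ∈ ({p} : Set V) := hsingle ▸ hpa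
      rw [Set.mem_singleton_iff.1 this]
  refine ⟨⟨c, hself c P.start_mem_support, hPT c P.start_mem_support⟩,
    fun a ha b hb => (hreach a ha).symm.trans (hreach b hb), fun v hv => ?_, fun u hu => ?_⟩
  · by_cases hslack : IsSlack G k T (cluster r v)
    · exact hslack.deg_le v (mem_cluster_self r v)
    · exact (hP v (hon v hv hslack) hslack).1
  · by_cases hslack : IsSlack G k T (cluster r u)
    · exact (hslack.isFreeable u (mem_cluster_self r u)).mono (cluster_subset_visited hu)
    · exact (hP u (hon u hu hslack) hslack).2

/-- No rerouting of `T` lowers a degree that exceeds `k`. -/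
def IsReroutingMinimal (G : SimpleGraph V) (k : ℕ) (T : SimpleGraph V) : Prop :=
  ∀ U H s, IsRerouting G k U T H → k < deg T s → deg T s ≤ deg H s

variable [Finite V]

/-- Otherwise all clusters on the path of `T` joining the two could be merged. -/
lemma rel_of_adj_of_isSlack (hTG : T ≤ G) (hT : Connects T T.support)
    (hmin : IsReroutingMinimal G k T) (hr : Maximal (IsSlackPartition G k T) r)
    (hx : IsSlack G k T (cluster r x)) (hy : IsSlack G k T (cluster r y)) (hxy : G.Adj x y) :
    r x y := by
  by_contra hne
  obtain ⟨c, hc⟩ := hx.inter_nonempty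
  obtain ⟨d, hd⟩ := hy.inter_nonempty
  have hdisj := disjoint_cluster hne
  have hcd : c ≠ d := fun h => hdisj.notMem_of_mem_left hc.1 (h ▸ hd.1)
  obtain ⟨P, hP⟩ := (hT c hc.2 d hd.2).exists_isPath
  have hPT : ∀ p ∈ P.support, p ∈ T.support := fun p =>
    mem_support_of_mem_walk_support P (Walk.not_nil_of_ne hcd)
  have hxU : cluster r x ⊆ visited r P := cluster_eq hc.1 ▸ subset_visited P.start_mem_support
  have hyU : cluster r y ⊆ visited r P := cluster_eq hd.1 ▸ subset_visited P.end_mem_support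
  have hslack : IsSlack G k T (visited r P) := by
    refine hr.prop.isSlack_visited hPT fun p hp hpslack => ?_
    have hpU := subset_visited hp (mem_cluster_self r p)
    obtain ⟨H, hH, hlt⟩ := hx.exists_rerouting_deg_lt hTG hy hdisj (mem_cluster_self r x)
      (mem_cluster_self r y) hxy hc hd hxU hyU hP
      (fun v hv => subset_visited hv (mem_cluster_self r v)) hp
      (fun h => hpslack (cluster_eq h ▸ hx)) (fun h => hpslack (cluster_eq h ▸ hy))
    have hdeg : deg T p ≤ k := not_lt.1 fun h => (hmin _ H p hH h).not_gt hlt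
    exact ⟨hdeg, H, hH, hlt.trans_le hdeg, p, ⟨hpU, hPT p hp⟩, Reachable.refl p⟩
  exact hne (hslack.rel_of_maximal hr (fun _ => cluster_subset_visited)
    (hxU (mem_cluster_self r x)) (hyU (mem_cluster_self r y)))

lemma rel_of_adj_of_notMem_support (hk : 2 ≤ k) (hTG : T ≤ G)
    (hT : Connects T T.support) (hmin : IsReroutingMinimal G k T)
    (hr : Maximal (IsSlackPartition G k T) r) (hz : z ∉ T.support)
    (hy : IsSlack G k T (cluster r y)) (hzy : G.Adj z y) : r z y := by
  by_contra hne
  rcases hr.prop z with hslack | hsingle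
  · exact hne (rel_of_adj_of_isSlack hTG hT hmin hr hslack hy hzy)
  · have hU := hy.insert hk hz (fun h => hne (r.symm h)) (mem_cluster_self r y) hzy
    refine hne (hU.rel_of_maximal hr ?_ (Set.mem_insert _ _) (Or.inr (mem_cluster_self r y)))
    rintro v (rfl | hv)
    · simp only [hsingle, Set.singleton_subset_iff, Set.mem_insert_iff, true_or]
    · exact cluster_eq hv ▸ Set.subset_insert _ _

theorem exists_separator_of_isReroutingMinimal (hk : 2 ≤ k) (hTG : T ≤ G)
    (hT : Connects T T.support) (hmin : IsReroutingMinimal G k T) :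
    ∃ W : Set V, (∀ v, k < deg T v → v ∈ W) ∧ (∀ w ∈ W, k ≤ deg T w) ∧
      ∀ a ∈ T.support \ W, ∀ b ∈ T.support \ W,
        (restrict G Wᶜ).Reachable a b → (restrict T Wᶜ).Reachable a b := by
  obtain ⟨r, hr⟩ := exists_maximal_isSlackPartition G k T
  set W := {v ∈ T.support | ¬ IsSlack G k T (cluster r v)}
  refine ⟨W, fun v hv => ⟨mem_support_of_deg_pos (by omega), fun hslack =>
    (hslack.deg_le v (mem_cluster_self r v)).not_gt hv⟩, fun w hw => ?_, ?_⟩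
  · by_contra! hdeg
    exact hw.2 ((hr.prop w).resolve_left hw.2 ▸ IsSlack.singleton hTG hw.1 hdeg)
  rintro a ⟨haT, haW⟩ b ⟨hbT, -⟩ hreach
  have ha : IsSlack G k T (cluster r a) := by_contra fun h => haW ⟨haT, h⟩
  have hrel : ∀ c, (restrict G Wᶜ).Reachable a c → r a c := fun c hac => by
    rw [reachable_iff_reflTransGen] at hac
    induction hac with
    | refl => exact r.refl a
    | @tail v w _ hvw hav =>
      obtain ⟨hvw, -, hwW⟩ := restrict_adj.1 hvw
      have hv : IsSlack G k T (cluster r v) := cluster_eq hav ▸ ha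
      refine r.trans hav ?_
      by_cases hwT : w ∈ T.support
      · have hw : IsSlack G k T (cluster r w) := by_contra fun h => hwW ⟨hwT, h⟩
        exact rel_of_adj_of_isSlack hTG hT hmin hr hv hw hvw
      · exact r.symm (rel_of_adj_of_notMem_support hk hTG hT hmin hr hwT hv hvw.symm)
  exact (ha.connects a ⟨mem_cluster_self r a, haT⟩ b ⟨hrel b hreach, hbT⟩).mono
    (restrict_mono le_rfl fun v hv hvW => hvW.2 (cluster_eq hv ▸ ha))

end Clusters

section ParentMap

variable {V : Type*} {T : SimpleGraph V} {C S W X : Set V} {root a b t u v z : V} {p : V → V}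
  {m : ℕ}

/-- The vertices in the component of `root`, other than `root`. -/
def nonroots (T : SimpleGraph V) (root : V) : Set V := {v | T.Reachable root v ∧ v ≠ root}

/-- `p` sends each vertex in the component of `root` to a neighbour closer to `root`. -/
structure IsParentMap (T : SimpleGraph V) (root : V) (p : V → V) : Prop where
  adj : ∀ v ∈ nonroots T root, T.Adj v (p v)
  dist_lt : ∀ v ∈ nonroots T root, T.dist root (p v) < T.dist root v

lemma exists_isParentMap (T : SimpleGraph V) (root : V) : ∃ p, IsParentMap T root p := by
  have hparent : ∀ v ∈ nonroots T root, ∃ w, T.Adj v w ∧ T.dist root w < T.dist root v := by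
    rintro v ⟨hreach, hne⟩
    obtain ⟨P, hP⟩ := hreach.symm.exists_walk_length_eq_dist
    cases P with
    | nil => exact absurd rfl hne
    | @cons _ w _ hvw Q =>
      refine ⟨w, hvw, ?_⟩
      rw [dist_comm, dist_comm (u := root), ← hP, Walk.length_cons]
      exact Nat.lt_succ_of_le (dist_le Q)
  choose! p hadj hdist using hparent
  exact ⟨p, hadj, hdist⟩

lemma mem_insert_root_nonroots (h : T.Reachable root v) : v ∈ insert root (nonroots T root) :=
  or_iff_not_imp_left.2 fun hv => ⟨h, hv⟩

lemma mem_of_reachable_restrict (h : (restrict T C).Reachable a b) (ha : a ∈ C) : b ∈ C := by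
  rw [reachable_iff_reflTransGen] at h
  cases h with
  | refl => exact ha
  | tail _ hb => exact (restrict_adj.1 hb).2.2

/-- The root and the children of vertices of `W`. If `p` is the parent map of a tree, those outside
`W` are exactly the topmost vertices of the components of `T - W`. -/
def tops (T : SimpleGraph V) (root : V) (p : V → V) (W : Set V) : Set V :=
  insert root {v ∈ nonroots T root | p v ∈ W}

lemma parent_mem_of_mem_tops (hu : u ∈ tops T root p W) (hunr : u ∈ nonroots T root) : p u ∈ W :=
  (hu.resolve_left hunr.2).2

/-- The top `u` may be charged to `z`: to itself if it lies in `W`, and otherwise to a vertex of `X`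
in its component of `T - W` or to a child in `W` of a vertex of that component. -/
structure IsCharge (T : SimpleGraph V) (X W : Set V) (root : V) (p : V → V) (u z : V) : Prop where
  of_notMem : z ∉ W → z ∈ X ∧ (restrict T Wᶜ).Reachable u z
  of_mem : z ∈ W → z = u ∨ (u ∉ W ∧ z ∈ nonroots T root ∧ (restrict T Wᶜ).Reachable u (p z))

namespace IsParentMap

lemma parent_mem (hp : IsParentMap T root p) (hv : v ∈ nonroots T root) :
    p v ∈ insert root (nonroots T root) :=
  mem_insert_root_nonroots (hv.1.trans (hp.adj v hv).reachable)

lemma eq_parent_of_subset (hp : IsParentMap T root p) (hT : Minimal (Connects · X) T)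
    (hS : S ⊆ nonroots T root) (hpS : ∀ v ∈ S, p v ∈ insert root S) (hXS : X ⊆ insert root S)
    (hab : T.Adj a b) : (a ∈ S ∧ p a = b) ∨ (b ∈ S ∧ p b = a) := by
  set F : SimpleGraph V := .fromRel fun a b => a ∈ S ∧ p a = b
  have hFT : F ≤ T := by
    rintro a b ⟨-, ⟨ha, rfl⟩ | ⟨hb, rfl⟩⟩
    exacts [hp.adj a (hS ha), (hp.adj b (hS hb)).symm]
  have hroot : ∀ n, ∀ v ∈ insert root S, T.dist root v = n → F.Reachable v root := by
    intro n
    induction n using Nat.strong_induction_on with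
    | _ n ih =>
      rintro v (rfl | hv) rfl
      · rfl
      · have hadj : F.Adj v (p v) := ⟨(hp.adj v (hS hv)).ne, Or.inl ⟨hv, rfl⟩⟩
        exact hadj.reachable.trans (ih _ (hp.dist_lt v (hS hv)) _ (hpS v hv) rfl)
  have hF : Connects F X := fun a ha b hb =>
    (hroot _ a (hXS ha) rfl).trans (hroot _ b (hXS hb) rfl).symm
  exact (hT.le_of_le hF hFT hab).2

lemma eq_parent_of_adj (hp : IsParentMap T root p) (hT : Minimal (Connects · X) T)
    (hroot : root ∈ X) (hab : T.Adj a b) :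
    (a ∈ nonroots T root ∧ p a = b) ∨ (b ∈ nonroots T root ∧ p b = a) :=
  hp.eq_parent_of_subset hT subset_rfl (fun _ => hp.parent_mem)
    (fun x hx => mem_insert_root_nonroots (hT.prop root hroot x hx)) hab

lemma exists_child (hp : IsParentMap T root p) (hT : Minimal (Connects · X) T) (hroot : root ∈ X)
    (hv : T.Reachable root v) (hvX : v ∉ X) : ∃ w ∈ nonroots T root, p w = v := by
  have hvroot : v ∈ nonroots T root := ⟨hv, fun h => hvX (h ▸ hroot)⟩
  by_contra! hchild
  have herase : ∀ x ∈ insert root (nonroots T root), x ≠ v →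
      x ∈ insert root (nonroots T root \ {v}) := fun x hx hxv => hx.imp_right fun h => ⟨h, hxv⟩
  rcases hp.eq_parent_of_subset hT (S := nonroots T root \ {v}) Set.sdiff_subset
    (fun w hw => herase _ (hp.parent_mem hw.1) (hchild w hw.1))
    (fun x hx => herase x (mem_insert_root_nonroots (hT.prop root hroot x hx))
      (ne_of_mem_of_not_mem hx hvX)) (hp.adj v hvroot) with ⟨⟨-, h⟩, -⟩ | ⟨⟨hw, -⟩, h⟩
  exacts [h rfl, hchild _ hw h]

lemma reflTransGen_parent (hp : IsParentMap T root p) (hT : Minimal (Connects · X) T)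
    (hroot : root ∈ X) (ht : t ∈ nonroots T root → p t ∉ C) (hut : (restrict T C).Reachable u t) :
    Relation.ReflTransGen (fun a b => a ∈ nonroots T root ∧ p a = b ∧ b ∈ C) u t := by
  rw [reachable_iff_reflTransGen] at hut
  induction hut using Relation.ReflTransGen.head_induction_on with
  | refl => rfl
  | @head a b hab _ ih =>
    obtain ⟨hadj, haC, hbC⟩ := restrict_adj.1 hab
    rcases hp.eq_parent_of_adj hT hroot hadj with ⟨ha, hpa⟩ | ⟨hb, rfl⟩
    · exact ih.head ⟨ha, hpa, hbC⟩
    · rcases ih.cases_head with rfl | ⟨c, ⟨-, rfl, -⟩, hct⟩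
      exacts [absurd haC (ht hb), hct]

lemma eq_of_reachable_restrict (hp : IsParentMap T root p) (hT : Minimal (Connects · X) T)
    (hroot : root ∈ X) (hu : u ∈ nonroots T root → p u ∉ C) (ht : t ∈ nonroots T root → p t ∉ C)
    (hut : (restrict T C).Reachable u t) : u = t := by
  rcases (hp.reflTransGen_parent hT hroot ht hut).cases_head with h | ⟨b, ⟨hunr, rfl, hbC⟩, -⟩
  exacts [h, absurd hbC (hu hunr)]

lemma mul_ncard_lt_ncard_tops [Finite V] (hp : IsParentMap T root p)
    (hT : Minimal (Connects · X) T) (hroot : root ∈ X) (hdeg : ∀ w ∈ W, m + 1 ≤ deg T w) :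
    m * W.ncard < (tops T root p W).ncard := by
  classical
  set N := {v ∈ nonroots T root | p v ∈ W}
  have hrootN : root ∉ N := fun h => h.1.2 rfl
  have hfiber : ∀ w ∈ W.toFinite.toFinset, m ≤ (N.toFinite.toFinset.filter (p · = w)).card := by
    intro w hw
    rw [Set.Finite.mem_toFinset] at hw
    have hnbr : T.neighborSet w ⊆ insert (p w) ↑(N.toFinite.toFinset.filter (p · = w)) := by
      intro b hb
      rcases hp.eq_parent_of_adj hT hroot hb with ⟨-, h⟩ | ⟨hbnr, h⟩
      · exact Or.inl h.symm
      · exact Or.inr (by simp [N, hbnr, h, hw])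
    have := (hdeg w hw).trans ((Set.ncard_le_ncard hnbr).trans (Set.ncard_insert_le _ _))
    rw [Set.ncard_coe_finset] at this
    omega
  have hsum := Finset.card_eq_sum_card_fiberwise (f := p) (s := N.toFinite.toFinset)
    (t := W.toFinite.toFinset) (fun v hv => by simpa using ((Set.Finite.mem_toFinset _).1 hv).2)
  rw [tops, Set.ncard_insert_of_notMem hrootN, Nat.lt_succ_iff, Set.ncard_eq_toFinset_card N,
    Set.ncard_eq_toFinset_card W, hsum, mul_comm]
  exact Finset.card_nsmul_le_sum _ _ _ hfiber

lemma exists_isCharge [Finite V] (hp : IsParentMap T root p) (hT : Minimal (Connects · X) T)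
    (hroot : root ∈ X) (hu : T.Reachable root u) : ∃ z, IsCharge T X W root p u z := by
  by_cases huW : u ∈ W
  · exact ⟨u, fun h => absurd huW h, fun _ => Or.inl rfl⟩
  by_cases hX : ∃ x ∈ X, (restrict T Wᶜ).Reachable u x
  · obtain ⟨x, hxX, hux⟩ := hX
    exact ⟨x, fun _ => ⟨hxX, hux⟩, fun h => absurd h (mem_of_reachable_restrict hux huW)⟩
  push Not at hX
  -- The deepest vertex of the component is not a leaf of `T`, so it has a child, which is in `W`.
  obtain ⟨v, huv, hdeep⟩ := Set.exists_max_image {v | (restrict T Wᶜ).Reachable u v}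
    (T.dist root) (Set.toFinite _) ⟨u, Reachable.refl u⟩
  obtain ⟨w, hw, rfl⟩ := hp.exists_child hT hroot (hu.trans (huv.mono (restrict_le T _)))
    fun hv => hX v hv huv
  have hwW : w ∈ W := by_contra fun hwW =>
    have hadj : (restrict T Wᶜ).Adj (p w) w :=
      restrict_adj.2 ⟨(hp.adj w hw).symm, mem_of_reachable_restrict huv huW, hwW⟩
    (hdeep w (huv.trans hadj.reachable)).not_gt (hp.dist_lt w hw)
  exact ⟨w, fun h => absurd hwW h, fun _ => Or.inr ⟨huW, hw, huv⟩⟩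

lemma eq_of_mem_tops (hp : IsParentMap T root p) (hT : Minimal (Connects · X) T)
    (hroot : root ∈ X) (hu : u ∈ tops T root p W) (hv : v ∈ tops T root p W)
    (huv : (restrict T Wᶜ).Reachable u v) : u = v :=
  hp.eq_of_reachable_restrict hT hroot (fun h => not_not.2 (parent_mem_of_mem_tops hu h))
    (fun h => not_not.2 (parent_mem_of_mem_tops hv h)) huv

lemma eq_of_isCharge (hp : IsParentMap T root p) (hT : Minimal (Connects · X) T) (hroot : root ∈ X)
    (hu : u ∈ tops T root p W) (hv : v ∈ tops T root p W) (huz : IsCharge T X W root p u z)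
    (hvz : IsCharge T X W root p v z) : u = v := by
  have hself : ∀ a ∈ tops T root p W, a ∈ nonroots T root → ∀ b ∉ W,
      ¬ (restrict T Wᶜ).Reachable b (p a) := fun a ha hanr b hb h =>
    mem_of_reachable_restrict h hb (parent_mem_of_mem_tops ha hanr)
  by_cases hz : z ∈ W
  · rcases huz.of_mem hz with rfl | ⟨huW, hznr, huz⟩ <;>
      rcases hvz.of_mem hz with rfl | ⟨hvW, hznr', hvz⟩
    · rfl
    · exact absurd hvz (hself z hu hznr' v hvW)
    · exact absurd huz (hself z hv hznr u huW)
    · exact hp.eq_of_mem_tops hT hroot hu hv (huz.trans hvz.symm)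
  · exact hp.eq_of_mem_tops hT hroot hu hv
      ((huz.of_notMem hz).2.trans (hvz.of_notMem hz).2.symm)

end IsParentMap

lemma connects_support_of_minimal (hT : Minimal (Connects · X) T) (hX : X.Nonempty) :
    Connects T T.support := by
  obtain ⟨root, hroot⟩ := hX
  obtain ⟨p, hp⟩ := exists_isParentMap T root
  have hreach : ∀ v ∈ T.support, T.Reachable root v := by
    rintro v ⟨w, hvw⟩
    rcases hp.eq_parent_of_adj hT hroot hvw with ⟨hv, -⟩ | ⟨hw, -⟩
    exacts [hv.1, hw.1.trans hvw.symm.reachable]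
  exact fun a ha b hb => (hreach a ha).symm.trans (hreach b hb)

theorem exists_separated_of_minimal_connects [Finite V] (hT : Minimal (Connects · X) T)
    (hX : X.Nonempty) (hdeg : ∀ w ∈ W, m + 2 ≤ deg T w) :
    ∃ Y ⊆ X \ W, Y.Pairwise (fun a b => ¬ (restrict T Wᶜ).Reachable a b) ∧
      m * W.ncard < Y.ncard := by
  obtain ⟨root, hroot⟩ := hX
  obtain ⟨p, hp⟩ := exists_isParentMap T root
  have hcharge : ∀ u ∈ tops T root p W,
      ∃ z, IsCharge T X W root p u z := by
    rintro u (rfl | hu)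
    exacts [hp.exists_isCharge hT hroot (Reachable.refl _), hp.exists_isCharge hT hroot hu.1.1]
  choose! f hf using hcharge
  have hinj : Set.InjOn f (tops T root p W) := fun u hu v hv huv =>
    hp.eq_of_isCharge hT hroot hu hv (hf u hu) (huv ▸ hf v hv)
  refine ⟨f '' tops T root p W \ W, ?_, ?_, ?_⟩
  · rintro _ ⟨⟨u, hu, rfl⟩, huW⟩
    exact ⟨((hf u hu).of_notMem huW).1, huW⟩
  · rintro _ ⟨⟨u, hu, rfl⟩, huW⟩ _ ⟨⟨v, hv, rfl⟩, hvW⟩ hne hreach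
    exact hne (congrArg f (hp.eq_of_mem_tops hT hroot hu hv
      (((hf u hu).of_notMem huW).2.trans (hreach.trans ((hf v hv).of_notMem hvW).2.symm))))
  · have htops := hp.mul_ncard_lt_ncard_tops hT hroot hdeg
    have himage := Set.ncard_le_ncard_sdiff_add_ncard (f '' tops T root p W) W
    rw [hinj.ncard_image] at himage
    linarith

end ParentMap

section Expansion

variable {V : Type*} [Finite V] {G : SimpleGraph V} {A B W X Y : Set V} {φ : ℝ}

lemma mul_min_ncard_le_ncard (hφ : 0 ≤ φ) (hX : IsVertexExpandingOn G Set.univ X φ)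
    (hA : A.Nonempty) (hB : B.Nonempty) (hAX : A ⊆ X \ W) (hBX : B ⊆ X \ W)
    (hAB : ∀ a ∈ A, ∀ b ∈ B, ¬ (restrict G Wᶜ).Reachable a b) :
    φ * min (A.ncard : ℝ) B.ncard ≤ W.ncard := by
  set L := {v | ∃ a ∈ A, (restrict G Wᶜ).Reachable a v}
  set R := (L ∪ W)ᶜ
  have hAL : A ⊆ L := fun a ha => ⟨a, ha, Reachable.refl a⟩
  have hBR : B ⊆ R := by
    rintro b hb (⟨a, ha, hab⟩ | hbW)
    exacts [hAB a ha b hb hab, (hBX hb).2 hbW]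
  have hLW : Disjoint L W := Set.disjoint_left.2 fun v ⟨a, ha, hav⟩ =>
    mem_of_reachable_restrict hav (hAX ha).2
  have hLR : ∀ u ∈ L, ∀ v ∈ R, ¬ G.Adj u v := by
    rintro u ⟨a, ha, hau⟩ v hv huv
    have huv' : (restrict G Wᶜ).Adj u v :=
      restrict_adj.2 ⟨huv, hLW.notMem_of_mem_left ⟨a, ha, hau⟩, fun h => hv (Or.inr h)⟩
    exact hv (Or.inl ⟨a, ha, hau.trans huv'.reachable⟩)
  have hAcard : (A.ncard : ℝ) ≤ (X ∩ (L ∪ W)).ncard := by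
    exact_mod_cast Set.ncard_le_ncard
      (Set.subset_inter (hAX.trans Set.sdiff_subset) (hAL.trans Set.subset_union_left))
  have hBcard : (B.ncard : ℝ) ≤ (X ∩ (R ∪ W)).ncard := by
    exact_mod_cast Set.ncard_le_ncard
      (Set.subset_inter (hBX.trans Set.sdiff_subset) (hBR.trans Set.subset_union_left))
  calc φ * min (A.ncard : ℝ) B.ncard
      ≤ φ * min ((X ∩ (L ∪ W)).ncard : ℝ) ((X ∩ (R ∪ W)).ncard : ℝ) := by gcongr
    _ ≤ W.ncard := hX L W R (Set.union_compl_self _) hLW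
        (disjoint_compl_right.mono_left Set.subset_union_left)
        (disjoint_compl_right.mono_left Set.subset_union_right) (hA.mono hAL) (hB.mono hBR) hLR

lemma connects_of_isVertexExpandingOn (hφ : 0 < φ) (hX : IsVertexExpandingOn G Set.univ X φ) :
    Connects G X := by
  intro a ha b hb
  by_contra hab
  have hcut : φ * min (({a} : Set V).ncard : ℝ) ({b} : Set V).ncard ≤ (∅ : Set V).ncard := by
    refine mul_min_ncard_le_ncard hφ.le hX (Set.singleton_nonempty a) (Set.singleton_nonempty b)
      (by simpa using ha) (by simpa using hb) fun x hx y hy h => ?_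
    exact hab (hx ▸ hy ▸ h.mono (restrict_le G _))
  simp only [Set.ncard_singleton, Set.ncard_empty, Nat.cast_one, min_self, mul_one,
    Nat.cast_zero] at hcut
  exact hcut.not_gt hφ

lemma mul_ncard_sub_one_le_two_mul_ncard (hφ : 0 ≤ φ) (hX : IsVertexExpandingOn G Set.univ X φ)
    (hYX : Y ⊆ X \ W) (hY : Y.Pairwise fun a b => ¬ (restrict G Wᶜ).Reachable a b) :
    φ * ((Y.ncard : ℝ) - 1) ≤ 2 * W.ncard := by
  rcases le_or_gt Y.ncard 1 with hsmall | hlarge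
  · have : (Y.ncard : ℝ) ≤ 1 := by exact_mod_cast hsmall
    linarith [mul_nonpos_of_nonneg_of_nonpos hφ (sub_nonpos.2 this), W.ncard.cast_nonneg (α := ℝ)]
  obtain ⟨A, hAY, hAcard⟩ := Set.exists_subset_card_eq (s := Y) (Nat.div_le_self Y.ncard 2)
  have hBcard : (Y \ A).ncard = Y.ncard - Y.ncard / 2 := by rw [Set.ncard_sdiff hAY, hAcard]
  have hcut : φ * min (A.ncard : ℝ) (Y \ A).ncard ≤ W.ncard :=
    mul_min_ncard_le_ncard hφ hX (Set.nonempty_of_ncard_ne_zero (by omega))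
      (Set.nonempty_of_ncard_ne_zero (by omega)) (hAY.trans hYX) (Set.sdiff_subset.trans hYX)
      fun a ha b hb => hY (hAY ha) hb.1 (ne_of_mem_of_not_mem ha hb.2)
  have hhalf : (Y.ncard : ℝ) ≤ 2 * min (A.ncard : ℝ) (Y \ A).ncard + 1 := by
    have : Y.ncard ≤ 2 * min A.ncard (Y \ A).ncard + 1 := by omega
    exact_mod_cast this
  calc φ * ((Y.ncard : ℝ) - 1) ≤ φ * (2 * min (A.ncard : ℝ) (Y \ A).ncard) := by
        gcongr
        linarith
    _ ≤ 2 * W.ncard := by linarith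

end Expansion

section LocalOptimum

variable {V : Type*} {G H T : SimpleGraph V} {U X : Set V} {k m : ℕ} {s : V}

/-- The total amount by which the degrees of `T` exceed `k`. -/
noncomputable def excess [Fintype V] (k : ℕ) (T : SimpleGraph V) : ℕ := ∑ v, (deg T v - k)

lemma excess_mono [Fintype V] (h : H ≤ T) : excess k H ≤ excess k T :=
  Finset.sum_le_sum fun _ _ => Nat.sub_le_sub_right (deg_mono h) k

lemma IsRerouting.excess_lt [Fintype V] (h : IsRerouting G k U T H) (hs : k < deg T s)
    (hlt : deg H s < deg T s) : excess k H < excess k T := by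
  refine Finset.sum_lt_sum (fun v _ => ?_) ⟨s, Finset.mem_univ s, by omega⟩
  have := h.deg_le v
  omega

lemma exists_minimal_connects_isReroutingMinimal [Finite V] (hG : Connects G X) (k : ℕ) :
    ∃ T ≤ G, Minimal (Connects · X) T ∧ IsReroutingMinimal G k T := by
  have := Fintype.ofFinite V
  obtain ⟨T₀, ⟨hT₀G, hT₀⟩, hleast⟩ := Set.exists_min_image {T | T ≤ G ∧ Connects T X} (excess k)
    (Set.toFinite _) ⟨G, le_rfl, hG⟩
  obtain ⟨T, hTT₀, hT⟩ := (Set.toFinite {T | Connects T X}).exists_le_minimal hT₀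
  refine ⟨T, hTT₀.trans hT₀G, hT, fun U H s hH hs => ?_⟩
  by_contra! hlt
  have hHX : Connects H X := fun a ha b hb => hH.reachable (hT.prop a ha b hb)
  exact ((hleast H ⟨hH.le, hHX⟩).trans_lt (hH.excess_lt hs hlt)).not_ge (excess_mono hTT₀)

theorem exists_connects_deg_le [Finite V] (hX : X.Nonempty) (hG : Connects G X)
    (hsep : ∀ W Y : Set V, W.Nonempty → Y ⊆ X \ W →
      Y.Pairwise (fun a b => ¬ (restrict G Wᶜ).Reachable a b) → Y.ncard ≤ m * W.ncard) :
    ∃ T ≤ G, Connects T X ∧ ∀ v, deg T v ≤ m + 2 := by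
  obtain ⟨T, hTG, hT, hmin⟩ := exists_minimal_connects_isReroutingMinimal hG (m + 2)
  refine ⟨T, hTG, hT.prop, fun s => ?_⟩
  by_contra! hs
  obtain ⟨W, hlarge, hdeg, hW⟩ := exists_separator_of_isReroutingMinimal (by omega) hTG
    (connects_support_of_minimal hT hX) hmin
  obtain ⟨Y, hYX, hY, hcard⟩ := exists_separated_of_minimal_connects hT hX hdeg
  have hYT : ∀ a ∈ Y, ∀ b ∈ Y, a ≠ b → a ∈ T.support \ W := fun a ha b hb hab =>
    ⟨mem_support_of_reachable hab (hT.prop a (hYX ha).1 b (hYX hb).1), (hYX ha).2⟩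
  exact (hsep W Y ⟨s, hlarge s hs⟩ hYX fun a ha b hb hab hreach => hY ha hb hab
    (hW a (hYT a ha b hb hab) b (hYT b hb a ha hab.symm) hreach)).not_gt hcard

end LocalOptimum

section Subgraph

variable {V : Type*} [Finite V] {G T : SimpleGraph V} {X : Set V}

lemma exists_isTree_of_connects (hTG : T ≤ G) (hX : X.Nonempty) (hT : Connects T X) :
    ∃ S : G.Subgraph, X ⊆ S.verts ∧ S.coe.IsTree ∧ ∀ v, (S.neighborSet v).ncard ≤ deg T v := by
  obtain ⟨x, hx⟩ := hX
  obtain ⟨F, hFT, hF, hreach⟩ := T.exists_isAcyclic_reachable_eq_le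
  set C := F.connectedComponentMk x
  refine ⟨(toSubgraph F (hFT.trans hTG)).induce C.supp, fun y hy => ?_, ?_, fun v => ?_⟩
  · exact ConnectedComponent.sound (hreach ▸ hT y hy x hx)
  · refine (Iso.isTree_iff ⟨Equiv.refl C.supp, fun {a b} => ?_⟩).2 (hF.isTree_connectedComponent C)
    exact ⟨fun h => ⟨a.2, b.2, h⟩, fun h => h.2.2⟩
  · exact Set.ncard_le_ncard fun w hw => hFT hw.2.2

end Subgraph

end SteinerTree

open SteinerTree in
theorem stmt_7_general (V : Type*) [Finite V] (G : SimpleGraph V) (φ : ℝ) (hφ : 0 < φ)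
    (X : Set V) (hXne : X.Nonempty)
    (hX : IsVertexExpandingOn G Set.univ X φ) :
    ∃ T : G.Subgraph, X ⊆ T.verts ∧ T.coe.IsTree ∧
      ∀ v ∈ T.verts, ((T.neighborSet v).ncard : ℝ) ≤ 2 / φ + 3 := by
  set m := ⌊2 / φ⌋₊ + 1
  have hm : (m : ℝ) ≤ 2 / φ + 1 := by
    push_cast [m]
    gcongr
    exact Nat.floor_le (by positivity)
  have hφm : 2 < φ * m := (div_lt_iff₀' hφ).1 (by exact_mod_cast Nat.lt_floor_add_one (2 / φ))
  obtain ⟨T, hTG, hT, hdeg⟩ := exists_connects_deg_le (m := m) hXne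
    (connects_of_isVertexExpandingOn hφ hX) fun W Y hW hYX hY => by
      have hcut := mul_ncard_sub_one_le_two_mul_ncard hφ.le hX hYX hY
      have hWpos : (0 : ℝ) < W.ncard := by exact_mod_cast hW.ncard_pos
      have hlt : φ * ((Y.ncard : ℝ) - 1) < φ * (m * W.ncard) := by nlinarith
      have : (Y.ncard : ℝ) < m * W.ncard + 1 := by linarith [lt_of_mul_lt_mul_left hlt hφ.le]
      exact Nat.lt_succ_iff.1 (by exact_mod_cast this)
  obtain ⟨S, hXS, hS, hSdeg⟩ := exists_isTree_of_connects hTG hXne hT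
  refine ⟨S, hXS, hS, fun v _ => ?_⟩
  have : ((S.neighborSet v).ncard : ℝ) ≤ m + 2 := by exact_mod_cast (hSdeg v).trans (hdeg v)
  linarith

/-- Any nonempty `φ`-vertex-expanding set `X` admits a Steiner
tree spanning `X` of maximum degree at most `6/φ + 3`. -/
theorem stmt_7 (V : Type) [Fintype V] (G : SimpleGraph V) (φ : ℝ) (hφ : 0 < φ)
    (X : Set V) (hXne : X.Nonempty)
    (hX : IsVertexExpandingOn G Set.univ X φ) :
    ∃ T : G.Subgraph, X ⊆ T.verts ∧ T.coe.IsTree ∧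
      ∀ v ∈ T.verts, ((T.neighborSet v).ncard : ℝ) ≤ 6 / φ + 3 := by
  obtain ⟨T, hXT, hT, hdeg⟩ := stmt_7_general V G φ hφ X hXne hX
  exact ⟨T, hXT, hT, fun v hv => (hdeg v hv).trans (by gcongr; norm_num)⟩
end

section
/- Let G = (V,E) be a finite simple graph, let φ > 0 be a real number, and let X ⊆ V be a nonempty set that is φ-tough in G. Then there exists a Steiner tree spanning X in G whose maximum degree is at most 2/φ + 3. -/
/-- `Γ` is (the vertex set of) a connected component of the subgraph of `G`
induced on `A`: it is a nonempty subset of `A`, connected in the induced sense,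
and closed under adjacency within `A`. -/
def IsCompOf {V : Type*} (G : SimpleGraph V) (A Γ : Set V) : Prop :=
  Γ ⊆ A ∧ Γ.Nonempty ∧ (G.induce Γ).Connected ∧
    ∀ u ∈ Γ, ∀ v ∈ A, G.Adj u v → v ∈ Γ

/-- `compCount G S X` is `c_{G−S}(X)`: the number of connected components of
the subgraph of `G` induced on the complement of `S` that contain a vertex
of `X`. -/
noncomputable def compCount {V : Type*} (G : SimpleGraph V) (S X : Set V) : ℕ :=
  {Γ : Set V | IsCompOf G Sᶜ Γ ∧ (Γ ∩ X).Nonempty}.ncard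

/-- `X` is `φ`-tough in `G`: whenever deleting `S` separates `X` into more than
one component, `|S| ≥ φ · c_{G−S}(X)`. -/
def IsTough {V : Type*} (G : SimpleGraph V) (X : Set V) (φ : ℝ) : Prop :=
  ∀ S : Set V, 1 < compCount G S X →
    φ * (compCount G S X : ℝ) ≤ (S.ncard : ℝ)

/-!
Let `n = ⌈2 / φ⌉₊` and `d = n + 2`. Among the subgraphs of `G` connecting `X`, take one, `H`, that
minimizes the total excess of the degrees over `d` and is minimal for inclusion; its edges form a
tree all of whose leaves lie in `X`. Call a set flexible if each of its vertices can be given room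
for one more edge by a rewiring of `H` within the set that raises no degree beyond `d`. By
optimality, a vertex of degree greater than `d` lies in no flexible set.

If `G` has an edge between two disjoint flexible sets, making room at both of its ends and adding it
closes a cycle through the path of `H` between the two sets. A vertex of this path then gains room
by deleting one of its edges on the cycle, so the two sets, the path, and the flexible sets met by
the path merge into a single flexible set. Hence in a maximal partition into flexible sets and
singletons, deleting the set `B` of vertices of `H` in no flexible class separates the flexible
classes from each other. All vertices of `B` have degree at least `d`, so counting degrees in the
tree yields `n * |B| + 2 ≤ 2 * c`, where `c` is the number of components of `G - B` meeting `X`.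
For nonempty `B` this contradicts toughness, so `B` is empty and no degree exceeds `d`.
-/

open SimpleGraph

variable {V : Type*} {G H F A B : SimpleGraph V} {C D X : Set V} {u v w x y z a b : V} {d : ℕ}

section Reachability

theorem reachable_of_forall_adj (h : ∀ x y, A.Adj x y → B.Reachable x y)
    (hxy : A.Reachable x y) : B.Reachable x y := by
  rw [reachable_iff_reflTransGen] at hxy
  induction hxy with
  | refl => exact .rfl
  | tail _ hadj ih => exact ih.trans (h _ _ hadj)

theorem mem_of_reachable (hC : ∀ x ∈ C, ∀ y, A.Adj x y → y ∈ C) (hx : x ∈ C)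
    (hxy : A.Reachable x y) : y ∈ C := by
  rw [reachable_iff_reflTransGen] at hxy
  induction hxy with
  | refl => exact hx
  | tail _ hadj ih => exact hC _ ih _ hadj

theorem exists_adj_forall_reachable_deleteEdges {p : A.Walk a b} (hp : p.IsTrail) (hab : a ≠ b)
    (hv : v ∈ p.support) :
    ∃ w, A.Adj v w ∧ ∀ x, A.Reachable a x →
      (A.deleteEdges {s(v, w)}).Reachable x a ∨ (A.deleteEdges {s(v, w)}).Reachable x b := by
  obtain ⟨w, hw, hvw⟩ := adj_of_mem_walk_support p (Walk.not_nil_of_ne hab) hv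
  refine ⟨w, hvw, fun x hx => ?_⟩
  let A' := A.deleteEdges {s(v, w)}
  let R : Set V := {x | A'.Reachable x a ∨ A'.Reachable x b}
  have hend : ∀ ⦃s t⦄, s(s, t) = s(v, w) → t ∈ p.support → t ∈ R := by
    intro s t hst ht
    by_contra h
    simp only [R, A', ← hst, Set.mem_ofPred_eq, reachable_comm (u := t), not_or] at h
    exact hp.not_mem_support_of_not_reachable h.1 h.2 ht
  have hvR : v ∈ R := hend Sym2.eq_swap hv
  have hwR : w ∈ R := hend rfl hw
  refine mem_of_reachable (C := R) (fun s hs t hst => ?_) (.inl .rfl) hx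
  by_cases he : s(s, t) = s(v, w)
  · rcases Sym2.eq_iff.1 he with ⟨-, rfl⟩ | ⟨-, rfl⟩ <;> assumption
  · have hts : A'.Reachable t s := (deleteEdges_adj.2 ⟨hst, he⟩ : A'.Adj s t).symm.reachable
    exact hs.imp hts.trans hts.trans

end Reachability

/-- The subgraph of `H` formed by the edges with both ends in `C`, as a graph on all of `V`. -/
def inside (H : SimpleGraph V) (C : Set V) : SimpleGraph V where
  Adj x y := H.Adj x y ∧ x ∈ C ∧ y ∈ C
  symm := ⟨fun _ _ h => ⟨h.1.symm, h.2.symm⟩⟩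
  loopless := ⟨fun _ h => h.1.ne rfl⟩

theorem inside_le (H : SimpleGraph V) (C : Set V) : inside H C ≤ H := fun _ _ h => h.1

theorem inside_univ (H : SimpleGraph V) : inside H Set.univ = H := by
  ext x y
  simp [inside]

theorem inside_mono (h : A ≤ B) (hCD : C ⊆ D) : inside A C ≤ inside B D :=
  fun _ _ hxy => ⟨h hxy.1, hCD hxy.2.1, hCD hxy.2.2⟩

/-- The graph with the edges of `F` inside `C` and the edges of `H` elsewhere. -/
def splice (C : Set V) (F H : SimpleGraph V) : SimpleGraph V :=
  inside F C ⊔ H \ inside H C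

theorem splice_adj_of_mem (hx : x ∈ C) (hy : y ∈ C) : (splice C F H).Adj x y ↔ F.Adj x y := by
  simp only [splice, inside, sup_adj, sdiff_adj]
  tauto

theorem splice_adj_of_not_mem (h : ¬(x ∈ C ∧ y ∈ C)) :
    (splice C F H).Adj x y ↔ H.Adj x y := by
  simp only [splice, inside, sup_adj, sdiff_adj]
  tauto

/-- `F` and `H` have the same edges, except possibly for the edges with both ends in `C`. -/
def AgreeOff (C : Set V) (F H : SimpleGraph V) : Prop :=
  ∀ ⦃x y⦄, ¬(x ∈ C ∧ y ∈ C) → (F.Adj x y ↔ H.Adj x y)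

theorem AgreeOff.mono (h : AgreeOff C F H) (hCD : C ⊆ D) : AgreeOff D F H :=
  fun _ _ hxy => h fun hC => hxy (hC.imp (@hCD _) (@hCD _))

theorem AgreeOff.trans (h₁ : AgreeOff C A B) (h₂ : AgreeOff C B F) : AgreeOff C A F :=
  fun _ _ hxy => (h₁ hxy).trans (h₂ hxy)

theorem AgreeOff.neighborSet_eq (h : AgreeOff C F H) (hx : x ∉ C) :
    F.neighborSet x = H.neighborSet x :=
  Set.ext fun _ => h fun hC => hx hC.1

theorem agreeOff_splice : AgreeOff C (splice C F H) H := fun _ _ => splice_adj_of_not_mem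

theorem agreeOff_deleteEdges_singleton (hv : v ∈ C) (hw : w ∈ C) :
    AgreeOff C (H.deleteEdges {s(v, w)}) H := by
  intro x y hxy
  rw [deleteEdges_adj, and_iff_left]
  aesop

theorem agreeOff_sup_edge (hv : v ∈ C) (hw : w ∈ C) : AgreeOff C (H ⊔ edge v w) H := by
  intro x y hxy
  simp only [sup_adj, edge_adj]
  aesop

/-- The number of neighbours of `v`; unlike `SimpleGraph.degree`, no finiteness instance is
involved. -/
noncomputable abbrev deg (H : SimpleGraph V) (v : V) : ℕ := (H.neighborSet v).ncard

theorem neighborSet_sup_edge_of_ne (hv : x ≠ v) (hw : x ≠ w) :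
    (H ⊔ edge v w).neighborSet x = H.neighborSet x := by
  ext y
  simp [edge_adj, hv, hw]

section Degree

variable [Finite V]

theorem deg_mono (h : A ≤ B) : deg A x ≤ deg B x :=
  Set.ncard_le_ncard fun _ hy => h hy

theorem deg_deleteEdges_lt (h : H.Adj v w) : deg (H.deleteEdges {s(v, w)}) v < deg H v :=
  Set.ncard_lt_ncard ⟨fun _ hy => deleteEdges_le _ hy, fun hsub => by
    simpa using (hsub h : (H.deleteEdges {s(v, w)}).Adj v w)⟩

theorem deg_sup_edge_le : deg (H ⊔ edge v w) x ≤ deg H x + 1 := by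
  have hedge : ((edge v w).neighborSet x).ncard ≤ 1 := by
    rw [Set.ncard_le_one_iff]
    simp only [mem_neighborSet, edge_adj]
    grind
  rw [deg, neighborSet_sup]
  exact (Set.ncard_union_le _ _).trans (Nat.add_le_add_left hedge _)

end Degree

theorem neighborSet_splice_eq (hF : AgreeOff C F H) (hA : A.neighborSet x = H.neighborSet x)
    (hx : x ∈ C) : (splice C F A).neighborSet x = F.neighborSet x := by
  ext y
  by_cases hy : y ∈ C
  · exact splice_adj_of_mem hx hy
  · have hAH : A.Adj x y ↔ H.Adj x y := Set.ext_iff.1 hA y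
    exact (splice_adj_of_not_mem fun h => hy h.2).trans (hAH.trans (hF fun h => hy h.2).symm)

/-- `F` releases `v` inside `C`: it is a rewiring of `H` within `C`, staying below `G`, that
connects the vertices of `C` met by `H` to `v` within `C`, raises no degree beyond `d`, and leaves
`v` room for one more edge under this degree condition. -/
structure IsRelease (G H : SimpleGraph V) (d : ℕ) (C : Set V) (v : V) (F : SimpleGraph V) :
    Prop where
  le : F ≤ G
  agreeOff : AgreeOff C F H
  reachable : ∀ x ∈ C ∩ H.support, (inside F C).Reachable x v
  deg_le : ∀ x, deg F x ≤ max d (deg H x)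
  deg_lt : deg F v < max d (deg H v)

/-- `C` is flexible: it is met and linked by `H`, and each of its vertices can be released inside
`C`. -/
structure IsFlexible (G H : SimpleGraph V) (d : ℕ) (C : Set V) : Prop where
  nonempty : (C ∩ H.support).Nonempty
  linked : ∀ x ∈ C ∩ H.support, ∀ y ∈ C ∩ H.support, (inside H C).Reachable x y
  exists_isRelease : ∀ v ∈ C, ∃ F, IsRelease G H d C v F

theorem IsRelease.reachable_inside (h : IsRelease G H d C v F) (hCD : C ⊆ D)
    (hxy : (inside H D).Reachable x y) : (inside F D).Reachable x y := by
  refine reachable_of_forall_adj (fun s t hst => ?_) hxy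
  by_cases hC : s ∈ C ∧ t ∈ C
  · exact ((h.reachable s ⟨hC.1, t, hst.1⟩).trans (h.reachable t ⟨hC.2, s, hst.1.symm⟩).symm).mono
      (inside_mono le_rfl hCD)
  · exact Adj.reachable ⟨(h.agreeOff hC).2 hst.1, hst.2⟩

theorem IsRelease.reachable_mono (h : IsRelease G H d C v F) (hxy : H.Reachable x y) :
    F.Reachable x y := by
  rw [← inside_univ H] at hxy
  simpa only [inside_univ] using h.reachable_inside (Set.subset_univ C) hxy

theorem IsRelease.mono (h : IsRelease G H d C v F) (hCD : C ⊆ D) (hC : (C ∩ H.support).Nonempty)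
    (hD : ∀ x ∈ D ∩ H.support, ∀ y ∈ D ∩ H.support, (inside H D).Reachable x y) :
    IsRelease G H d D v F where
  __ := h
  agreeOff := h.agreeOff.mono hCD
  reachable x hx := by
    obtain ⟨a, ha⟩ := hC
    exact (h.reachable_inside hCD (hD x hx a ⟨hCD ha.1, ha.2⟩)).trans
      ((h.reachable a ha).mono (inside_mono le_rfl hCD))

theorem isFlexible_singleton (hHG : H ≤ G) (hv : v ∈ H.support) (hdeg : deg H v < d) :
    IsFlexible G H d {v} where
  nonempty := ⟨v, rfl, hv⟩
  linked := by
    rintro x ⟨rfl, -⟩ y ⟨rfl, -⟩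
    rfl
  exists_isRelease := by
    rintro x rfl
    refine ⟨H, hHG, fun _ _ _ => .rfl, ?_, fun x => le_max_right _ _, lt_max_of_lt_left hdeg⟩
    rintro y ⟨rfl, -⟩
    rfl

section Flexible

variable [Finite V]

theorem IsRelease.sup_edge (h : IsRelease G H d C u F) (hd : 2 ≤ d) (hz : z ∉ H.support)
    (hzC : z ∉ C) (hu : u ∈ C) (huz : G.Adj u z) :
    IsRelease G H d (insert z C) z (F ⊔ edge u z) := by
  have hzF : F.neighborSet z = ∅ := by
    rw [h.agreeOff.neighborSet_eq hzC]
    exact Set.eq_empty_of_forall_notMem fun y hy => hz ⟨y, hy⟩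
  have hFz : deg (F ⊔ edge u z) z < d := by
    have hdeg : deg F z = 0 := by rw [deg, hzF, Set.ncard_empty]
    have hle : deg (F ⊔ edge u z) z ≤ deg F z + 1 := deg_sup_edge_le
    omega
  have hCz : C ⊆ insert z C := Set.subset_insert z C
  refine ⟨sup_le h.le ?_, ?_, ?_, fun x => ?_, lt_max_of_lt_left hFz⟩
  · exact (edge_le_iff _).2 (.inr huz)
  · exact (agreeOff_sup_edge (hCz hu) (Set.mem_insert z C)).trans (h.agreeOff.mono hCz)
  · rintro x ⟨rfl | hx, hxH⟩
    · exact absurd hxH hz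
    · have huz' : (inside (F ⊔ edge u z) (insert z C)).Adj u z :=
        ⟨.inr (by simp [edge_adj, huz.ne]), hCz hu, Set.mem_insert z C⟩
      exact ((h.reachable x ⟨hx, hxH⟩).mono (inside_mono le_sup_left hCz)).trans huz'.reachable
  · rcases eq_or_ne x u with rfl | hxu
    · exact deg_sup_edge_le.trans h.deg_lt
    rcases eq_or_ne x z with rfl | hxz
    · exact (lt_max_of_lt_left hFz).le
    rw [deg, neighborSet_sup_edge_of_ne hxu hxz]
    exact h.deg_le x

theorem IsFlexible.insert_of_adj (hC : IsFlexible G H d C) (hd : 2 ≤ d) (hz : z ∉ H.support)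
    (hzC : z ∉ C) (hu : u ∈ C) (huz : G.Adj u z) : IsFlexible G H d (insert z C) := by
  have hCz : C ⊆ insert z C := Set.subset_insert z C
  have hsupp : insert z C ∩ H.support = C ∩ H.support := Set.insert_inter_of_notMem hz
  have hlinked : ∀ x ∈ insert z C ∩ H.support, ∀ y ∈ insert z C ∩ H.support,
      (inside H (insert z C)).Reachable x y := by
    rw [hsupp]
    exact fun x hx y hy => (hC.linked x hx y hy).mono (inside_mono le_rfl hCz)
  refine ⟨hsupp ▸ hC.nonempty, hlinked, ?_⟩
  rintro v (rfl | hv)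
  · obtain ⟨F, hF⟩ := hC.exists_isRelease u hu
    exact ⟨_, hF.sup_edge hd hz hzC hu huz⟩
  · obtain ⟨F, hF⟩ := hC.exists_isRelease v hv
    exact ⟨F, hF.mono hCz hC.nonempty hlinked⟩

end Flexible

section Exchange

variable {C₁ C₂ : Set V} {F₁ F₂ : SimpleGraph V} {v' a₁ a₂ : V}

theorem inside_le_splice (hdisj : Disjoint C₁ C₂) :
    inside F₁ C₁ ≤ splice C₂ F₂ F₁ :=
  fun _ _ h => (splice_adj_of_not_mem fun h₂ => hdisj.notMem_of_mem_left h.2.1 h₂.1).2 h.1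

/-- The graph obtained from `splice C₂ F₂ F₁` by trading the edge `s(v, v')` for `s(u, w)`. -/
def edgeExchange (C₂ : Set V) (F₁ F₂ : SimpleGraph V) (u w v v' : V) : SimpleGraph V :=
  (splice C₂ F₂ F₁).deleteEdges {s(v, v')} ⊔ edge u w

theorem inside_le_edgeExchange (hA : inside A C ≤ splice C₂ F₂ F₁) (hv : v ∉ C) (hCD : C ⊆ D) :
    inside A C ≤ inside (edgeExchange C₂ F₁ F₂ u w v v') D := by
  refine fun x y hxy => ⟨.inl (deleteEdges_adj.2 ⟨hA hxy, fun he => ?_⟩), hCD hxy.2.1, hCD hxy.2.2⟩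
  rcases Sym2.eq_iff.1 he with ⟨rfl, -⟩ | ⟨-, rfl⟩
  · exact hv hxy.2.1
  · exact hv hxy.2.2

theorem IsRelease.agreeOff_edgeExchange (h₁ : IsRelease G H d C₁ u F₁) (hC₁ : C₁ ⊆ D) (hC₂ : C₂ ⊆ D)
    (hu : u ∈ D) (hw : w ∈ D) (hv : v ∈ D) (hv' : v' ∈ D) :
    AgreeOff D (edgeExchange C₂ F₁ F₂ u w v v') H :=
  (agreeOff_sup_edge hu hw).trans <| (agreeOff_deleteEdges_singleton hv hv').trans <|
    (agreeOff_splice.mono hC₂).trans (h₁.agreeOff.mono hC₁)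

theorem splice_le (hF : F ≤ G) (hH : H ≤ G) : splice C F H ≤ G :=
  sup_le ((inside_le F C).trans hF) (sdiff_le.trans hH)

theorem IsRelease.edgeExchange_le (h₁ : IsRelease G H d C₁ u F₁) (h₂ : IsRelease G H d C₂ w F₂)
    (huw : G.Adj u w) : edgeExchange C₂ F₁ F₂ u w v v' ≤ G :=
  sup_le ((deleteEdges_le _).trans (splice_le h₂.le h₁.le)) ((edge_le_iff _).2 (.inr huw))

/-- Each side of the broken edge `s(v, v')` stays attached to one of `C₁` and `C₂`, and these two
are now joined by the edge `s(u, w)`. -/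
theorem IsRelease.reachable_edgeExchange (h₁ : IsRelease G H d C₁ u F₁)
    (h₂ : IsRelease G H d C₂ w F₂) (hdisj : Disjoint C₁ C₂) (hC₁ : C₁ ⊆ D) (hC₂ : C₂ ⊆ D)
    (hu : u ∈ C₁) (hw : w ∈ C₂) (hv₁ : v ∉ C₁) (hv₂ : v ∉ C₂)
    (ha₁ : a₁ ∈ C₁ ∩ H.support) (ha₂ : a₂ ∈ C₂ ∩ H.support)
    (hx : ((inside H D).deleteEdges {s(v, v')}).Reachable x a₁ ∨
      ((inside H D).deleteEdges {s(v, v')}).Reachable x a₂) :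
    (inside (edgeExchange C₂ F₁ F₂ u w v v') D).Reachable x u := by
  let E := edgeExchange C₂ F₁ F₂ u w v v'
  have hE₁ : inside F₁ C₁ ≤ inside E D :=
    inside_le_edgeExchange (inside_le_splice hdisj) hv₁ hC₁
  have hE₂ : inside F₂ C₂ ≤ inside E D := inside_le_edgeExchange le_sup_left hv₂ hC₂
  have hwu : (inside E D).Reachable w u := by
    have huw : u ≠ w := fun h => hdisj.notMem_of_mem_left hu (h ▸ hw)
    exact Adj.reachable ⟨.inr (by simp [edge_adj, huw.symm]), hC₂ hw, hC₁ hu⟩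
  have hH : ∀ s t, ((inside H D).deleteEdges {s(v, v')}).Adj s t → (inside E D).Reachable s t := by
    intro s t hst
    obtain ⟨⟨hadj, hs, ht⟩, hne⟩ := deleteEdges_adj.1 hst
    have hsH : s ∈ H.support := ⟨t, hadj⟩
    have htH : t ∈ H.support := ⟨s, hadj.symm⟩
    by_cases hst₁ : s ∈ C₁ ∧ t ∈ C₁
    · exact ((h₁.reachable s ⟨hst₁.1, hsH⟩).trans (h₁.reachable t ⟨hst₁.2, htH⟩).symm).mono hE₁
    by_cases hst₂ : s ∈ C₂ ∧ t ∈ C₂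
    · exact ((h₂.reachable s ⟨hst₂.1, hsH⟩).trans (h₂.reachable t ⟨hst₂.2, htH⟩).symm).mono hE₂
    have hsplice : (splice C₂ F₂ F₁).Adj s t :=
      (splice_adj_of_not_mem hst₂).2 ((h₁.agreeOff hst₁).2 hadj)
    exact Adj.reachable ⟨.inl (deleteEdges_adj.2 ⟨hsplice, hne⟩), hs, ht⟩
  rcases hx with hx | hx
  · exact (reachable_of_forall_adj hH hx).trans ((h₁.reachable a₁ ha₁).mono hE₁)
  · exact (reachable_of_forall_adj hH hx).trans (((h₂.reachable a₂ ha₂).mono hE₂).trans hwu)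

theorem IsRelease.deg_splice_le (h₁ : IsRelease G H d C₁ u F₁) (h₂ : IsRelease G H d C₂ w F₂)
    (hdisj : Disjoint C₁ C₂) (x : V) : deg (splice C₂ F₂ F₁) x ≤ max d (deg H x) := by
  by_cases hx : x ∈ C₂
  · have hx₁ : x ∉ C₁ := hdisj.notMem_of_mem_right hx
    rw [deg, neighborSet_splice_eq h₂.agreeOff (h₁.agreeOff.neighborSet_eq hx₁) hx]
    exact h₂.deg_le x
  · rw [deg, agreeOff_splice.neighborSet_eq hx]
    exact h₁.deg_le x

variable [Finite V]

theorem IsRelease.deg_edgeExchange_le (h₁ : IsRelease G H d C₁ u F₁) (h₂ : IsRelease G H d C₂ w F₂)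
    (hdisj : Disjoint C₁ C₂) (hu : u ∈ C₁) (hw : w ∈ C₂) (x : V) :
    deg (edgeExchange C₂ F₁ F₂ u w v v') x ≤ max d (deg H x) := by
  have hu₂ : u ∉ C₂ := hdisj.notMem_of_mem_left hu
  have hw₁ : w ∉ C₁ := hdisj.notMem_of_mem_right hw
  have hsplice_u : deg (splice C₂ F₂ F₁) u < max d (deg H u) := by
    rw [deg, agreeOff_splice.neighborSet_eq hu₂]
    exact h₁.deg_lt
  have hsplice_w : deg (splice C₂ F₂ F₁) w < max d (deg H w) := by
    rw [deg, neighborSet_splice_eq h₂.agreeOff (h₁.agreeOff.neighborSet_eq hw₁) hw]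
    exact h₂.deg_lt
  have hdel : deg ((splice C₂ F₂ F₁).deleteEdges {s(v, v')}) x ≤ deg (splice C₂ F₂ F₁) x :=
    deg_mono (deleteEdges_le _)
  have hsup : deg (edgeExchange C₂ F₁ F₂ u w v v') x ≤
      deg ((splice C₂ F₂ F₁).deleteEdges {s(v, v')}) x + 1 := deg_sup_edge_le
  rcases eq_or_ne x u with rfl | hxu
  · exact (hsup.trans (Nat.succ_le_succ hdel)).trans hsplice_u
  rcases eq_or_ne x w with rfl | hxw
  · exact (hsup.trans (Nat.succ_le_succ hdel)).trans hsplice_w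
  rw [edgeExchange, deg, neighborSet_sup_edge_of_ne hxu hxw]
  exact hdel.trans (h₁.deg_splice_le h₂ hdisj x)

theorem IsRelease.deg_edgeExchange_lt (h₁ : IsRelease G H d C₁ u F₁) (hu : u ∈ C₁) (hw : w ∈ C₂)
    (hv₁ : v ∉ C₁) (hv₂ : v ∉ C₂) (hvv' : H.Adj v v') :
    deg (edgeExchange C₂ F₁ F₂ u w v v') v < deg H v := by
  have hnbr : (splice C₂ F₂ F₁).neighborSet v = H.neighborSet v :=
    (agreeOff_splice.neighborSet_eq hv₂).trans (h₁.agreeOff.neighborSet_eq hv₁)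
  have hadj : (splice C₂ F₂ F₁).Adj v v' := (Set.ext_iff.1 hnbr v').2 hvv'
  have hvu : v ≠ u := fun h => hv₁ (h ▸ hu)
  have hvw : v ≠ w := fun h => hv₂ (h ▸ hw)
  rw [edgeExchange, deg, neighborSet_sup_edge_of_ne hvu hvw, deg, ← hnbr]
  exact deg_deleteEdges_lt hadj

theorem IsRelease.exchange (h₁ : IsRelease G H d C₁ u F₁) (h₂ : IsRelease G H d C₂ w F₂)
    (hdisj : Disjoint C₁ C₂) (hC₁ : C₁ ⊆ D) (hC₂ : C₂ ⊆ D) (hu : u ∈ C₁) (hw : w ∈ C₂)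
    (huw : G.Adj u w) (hv₁ : v ∉ C₁) (hv₂ : v ∉ C₂) (hvv' : (inside H D).Adj v v')
    (ha₁ : a₁ ∈ C₁ ∩ H.support) (ha₂ : a₂ ∈ C₂ ∩ H.support)
    (hD : ∀ x ∈ D ∩ H.support, ((inside H D).deleteEdges {s(v, v')}).Reachable x a₁ ∨
      ((inside H D).deleteEdges {s(v, v')}).Reachable x a₂) :
    IsRelease G H d D v (edgeExchange C₂ F₁ F₂ u w v v') where
  le := h₁.edgeExchange_le h₂ huw
  agreeOff := h₁.agreeOff_edgeExchange hC₁ hC₂ (hC₁ hu) (hC₂ hw) hvv'.2.1 hvv'.2.2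
  reachable x hx := by
    have hto_u : ∀ y ∈ D ∩ H.support,
        (inside (edgeExchange C₂ F₁ F₂ u w v v') D).Reachable y u := fun y hy =>
      h₁.reachable_edgeExchange h₂ hdisj hC₁ hC₂ hu hw hv₁ hv₂ ha₁ ha₂ (hD y hy)
    exact (hto_u x hx).trans (hto_u v ⟨hvv'.2.1, v', hvv'.1⟩).symm
  deg_le := h₁.deg_edgeExchange_le h₂ hdisj hu hw
  deg_lt := lt_max_of_lt_right (h₁.deg_edgeExchange_lt hu hw hv₁ hv₂ hvv'.1)

end Exchange

section Merge

variable {C₁ C₂ : Set V} {a₁ a₂ : V} {p : H.Walk a₁ a₂}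

theorem mem_support_of_mem_support_walk (ha : a₁ ∈ H.support) (hv : v ∈ p.support) :
    v ∈ H.support := by
  classical
  rcases eq_or_ne v a₁ with rfl | hne
  · exact ha
  · exact mem_support_of_reachable hne ⟨(p.takeUntil v hv).reverse⟩

theorem exists_isPath_inside (hp : p.IsPath) (hpD : ∀ m ∈ p.support, m ∈ D) :
    ∃ q : (inside H D).Walk a₁ a₂, q.IsPath ∧ q.support = p.support := by
  have hedges : ∀ e ∈ p.edges, e ∈ (inside H D).edgeSet := by
    intro e he
    induction e with
    | h x y => exact ⟨p.adj_of_mem_edges he, hpD x (p.fst_mem_support_of_mem_edges he),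
        hpD y (p.snd_mem_support_of_mem_edges he)⟩
  exact ⟨p.transfer _ hedges, hp.transfer hedges, p.support_transfer hedges⟩

theorem reachable_inside_of_walk (hp : p.IsPath) (ha₁ : a₁ ∈ H.support)
    (hpD : ∀ m ∈ p.support, m ∈ D) (hxD : x ∈ D ∩ H.support)
    (hx : x ∈ p.support ∨ ∃ C ⊆ D, IsFlexible G H d C ∧ x ∈ C ∧ ∃ m ∈ C, m ∈ p.support) :
    (inside H D).Reachable a₁ x := by
  classical
  obtain ⟨q, -, hqp⟩ := exists_isPath_inside hp hpD
  have hpath : ∀ m ∈ p.support, (inside H D).Reachable a₁ m := fun m hm =>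
    ⟨q.takeUntil m (hqp ▸ hm)⟩
  rcases hx with hx | ⟨C, hCD, hC, hxC, m, hmC, hm⟩
  · exact hpath x hx
  · have hmH : m ∈ H.support := mem_support_of_mem_support_walk ha₁ hm
    exact (hpath m hm).trans
      ((hC.linked m ⟨hmC, hmH⟩ x ⟨hxC, hxD.2⟩).mono (inside_mono le_rfl hCD))

theorem IsFlexible.merge [Finite V] (h₁ : IsFlexible G H d C₁) (h₂ : IsFlexible G H d C₂)
    (hdisj : Disjoint C₁ C₂) (hC₁ : C₁ ⊆ D) (hC₂ : C₂ ⊆ D) (hu : u ∈ C₁) (hw : w ∈ C₂)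
    (huw : G.Adj u w) (ha₁ : a₁ ∈ C₁ ∩ H.support) (ha₂ : a₂ ∈ C₂ ∩ H.support) (hp : p.IsPath)
    (hpD : ∀ m ∈ p.support, m ∈ D)
    (hD : ∀ x ∈ D, x ∈ p.support ∨
      ∃ C ⊆ D, IsFlexible G H d C ∧ x ∈ C ∧ ∃ m ∈ C, m ∈ p.support) :
    IsFlexible G H d D := by
  obtain ⟨q, hq, hqp⟩ := exists_isPath_inside hp hpD
  have hfrom : ∀ x ∈ D ∩ H.support, (inside H D).Reachable a₁ x := fun x hx =>
    reachable_inside_of_walk hp ha₁.2 hpD hx (hD x hx.1)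
  have hlinked : ∀ x ∈ D ∩ H.support, ∀ y ∈ D ∩ H.support, (inside H D).Reachable x y :=
    fun x hx y hy => (hfrom x hx).symm.trans (hfrom y hy)
  have hmono : ∀ C ⊆ D, IsFlexible G H d C → ∀ v ∈ C, ∃ F, IsRelease G H d D v F := by
    intro C hCD hC v hv
    obtain ⟨F, hF⟩ := hC.exists_isRelease v hv
    exact ⟨F, hF.mono hCD hC.nonempty hlinked⟩
  refine ⟨⟨a₁, hC₁ ha₁.1, ha₁.2⟩, hlinked, fun v hv => ?_⟩
  by_cases hv₁ : v ∈ C₁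
  · exact hmono C₁ hC₁ h₁ v hv₁
  by_cases hv₂ : v ∈ C₂
  · exact hmono C₂ hC₂ h₂ v hv₂
  rcases hD v hv with hvp | ⟨C, hCD, hC, hvC, -⟩
  · have hne : a₁ ≠ a₂ := fun h => hdisj.notMem_of_mem_left ha₁.1 (h ▸ ha₂.1)
    obtain ⟨v', hvv', hdel⟩ :=
      exists_adj_forall_reachable_deleteEdges hq.isTrail hne (hqp ▸ hvp : v ∈ q.support)
    obtain ⟨F₁, hF₁⟩ := h₁.exists_isRelease u hu
    obtain ⟨F₂, hF₂⟩ := h₂.exists_isRelease w hw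
    exact ⟨_, hF₁.exchange hF₂ hdisj hC₁ hC₂ hu hw huw hv₁ hv₂ hvv' ha₁ ha₂
      fun x hx => hdel x (hfrom x hx)⟩
  · exact hmono C hCD hC v hvC

end Merge

section FlexiblePartition

variable {r : Setoid V}

/-- Every class of `r` with more than one element is flexible. -/
def IsFlexiblePartition (G H : SimpleGraph V) (d : ℕ) (r : Setoid V) : Prop :=
  ∀ v, IsFlexible G H d {x | r x v} ∨ ∀ x, r x v → x = v

theorem isFlexiblePartition_bot : IsFlexiblePartition G H d ⊥ := fun _ => .inr fun _ h => h

/-- The coarsening of `r` that turns the union `D` of classes of `r` into a single class. -/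
def joinClasses (r : Setoid V) (D : Set V) (hD : ∀ x y, r x y → y ∈ D → x ∈ D) : Setoid V where
  r x y := r x y ∨ x ∈ D ∧ y ∈ D
  iseqv :=
    { refl := fun x => .inl (r.refl x)
      symm := fun h => h.imp r.symm And.symm
      trans := by
        rintro x y z (hxy | hxy) (hyz | hyz)
        · exact .inl (r.trans hxy hyz)
        · exact .inr ⟨hD x y hxy hyz.1, hyz.2⟩
        · exact .inr ⟨hxy.1, hD z y (r.symm hyz) hxy.2⟩
        · exact .inr ⟨hxy.1, hyz.2⟩ }

theorem IsFlexiblePartition.join (hr : IsFlexiblePartition G H d r)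
    (hD : ∀ x y, r x y → y ∈ D → x ∈ D) (hflex : IsFlexible G H d D) :
    IsFlexiblePartition G H d (joinClasses r D hD) := by
  intro v
  by_cases hv : v ∈ D
  · have hclass : {x | joinClasses r D hD x v} = D :=
      Set.ext fun x => ⟨fun h => h.elim (fun h => hD x v h hv) And.left, fun h => .inr ⟨h, hv⟩⟩
    exact .inl (by rwa [hclass])
  · have hrel : ∀ x, joinClasses r D hD x v ↔ r x v := fun x =>
      ⟨fun h => h.resolve_right fun h => hv h.2, .inl⟩
    simpa only [hrel] using hr v

theorem IsFlexiblePartition.rel_of_maximal (hr : Maximal (IsFlexiblePartition G H d) r)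
    (hD : ∀ x y, r x y → y ∈ D → x ∈ D) (hflex : IsFlexible G H d D) (hx : x ∈ D) (hy : y ∈ D) :
    r x y :=
  hr.le_of_ge (hr.prop.join hD hflex) (fun _ _ => .inl) (.inr ⟨hx, hy⟩)

variable [Finite V]

theorem IsFlexiblePartition.rel_of_adj_of_isFlexible (hr : Maximal (IsFlexiblePartition G H d) r)
    (hH : ∀ x ∈ H.support, ∀ y ∈ H.support, H.Reachable x y)
    (hu : IsFlexible G H d {x | r x u}) (hw : IsFlexible G H d {x | r x w})
    (huw : G.Adj u w) : r u w := by
  by_contra hne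
  obtain ⟨a₁, ha₁⟩ := hu.nonempty
  obtain ⟨a₂, ha₂⟩ := hw.nonempty
  obtain ⟨p, hp⟩ := (hH a₁ ha₁.2 a₂ ha₂.2).exists_isPath
  have hdisj : Disjoint {x | r x u} {x | r x w} :=
    Set.disjoint_left.2 fun x hxu hxw => hne (r.trans (r.symm hxu) hxw)
  let D : Set V := {x | ∃ m ∈ p.support, r x m}
  have hsat : ∀ x y, r x y → y ∈ D → x ∈ D := fun x y hxy ⟨m, hm, hym⟩ => ⟨m, hm, r.trans hxy hym⟩
  have hclass : ∀ m ∈ p.support, ∀ {y}, r m y → {x | r x y} ⊆ D := fun m hm y hmy x hxy =>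
    ⟨m, hm, r.trans hxy (r.symm hmy)⟩
  have huD := hclass a₁ p.start_mem_support ha₁.1
  have hwD := hclass a₂ p.end_mem_support ha₂.1
  have hflex : IsFlexible G H d D := by
    refine hu.merge hw hdisj huD hwD (r.refl u) (r.refl w) huw ha₁ ha₂ hp
      (fun m hm => ⟨m, hm, r.refl m⟩) fun x ⟨m, hm, hxm⟩ => ?_
    rcases hr.prop m with hmflex | hmsing
    · exact .inr ⟨_, hclass m hm (r.refl m), hmflex, hxm, m, r.refl m, hm⟩
    · exact .inl (hmsing x hxm ▸ hm)
  exact hne (IsFlexiblePartition.rel_of_maximal hr hsat hflex (huD (r.refl u)) (hwD (r.refl w)))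

theorem IsFlexiblePartition.mem_support_of_adj (hr : Maximal (IsFlexiblePartition G H d) r)
    (hd : 2 ≤ d) (hu : IsFlexible G H d {x | r x u}) (hw : ¬IsFlexible G H d {x | r x w})
    (huw : G.Adj u w) : w ∈ H.support := by
  by_contra hwH
  have hsing : ∀ x, r x w → x = w := (hr.prop w).resolve_left hw
  have hwu : ¬r w u := fun h => huw.ne (hsing u (r.symm h))
  have hflex : IsFlexible G H d (insert w {x | r x u}) :=
    hu.insert_of_adj hd hwH hwu (r.refl u) huw
  refine hwu (IsFlexiblePartition.rel_of_maximal hr ?_ hflex (Set.mem_insert w _)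
    (Set.mem_insert_of_mem w (r.refl u)))
  rintro x y hxy (rfl | hy)
  · exact .inl (hsing x hxy)
  · exact .inr (r.trans hxy hy)

theorem exists_maximal_isFlexiblePartition :
    ∃ r, Maximal (IsFlexiblePartition G H d) r := by
  have : Finite (Setoid V) := Finite.of_injective (fun r : Setoid V => r.r) fun r s h =>
    Setoid.ext fun x y => iff_of_eq (congrFun₂ h x y)
  obtain ⟨r, -, hr⟩ := exists_maximal_ge_of_wellFoundedGT (IsFlexiblePartition G H d) ⊥
    isFlexiblePartition_bot
  exact ⟨r, hr⟩

end FlexiblePartition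

section Counting

theorem deg_induce {S : Set V} (a : S) : deg (H.induce S) a = (H.neighborSet a ∩ S).ncard := by
  rw [deg, ← Set.ncard_image_of_injective _ Subtype.val_injective]
  congr 1
  ext y
  simp

theorem sum_deg_eq_two_mul_ncard_edgeSet [Fintype V] (H : SimpleGraph V) :
    ∑ v, deg H v = 2 * H.edgeSet.ncard := by
  classical
  rw [← coe_edgeFinset, Set.ncard_coe_finset, ← sum_degrees_eq_twice_card_edges]
  refine Finset.sum_congr rfl fun v _ => ?_
  rw [← card_neighborFinset_eq_degree, ← Set.ncard_coe_finset, coe_neighborFinset]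

theorem sum_two_sub_deg_le_two [Finite V] {S : Finset V}
    (hS : (H.induce (S : Set V)).Connected) : ∑ v ∈ S, (2 - deg H v : ℤ) ≤ 2 := by
  have hcard := hS.card_vert_le_card_edgeSet_add_one
  have hsum := sum_deg_eq_two_mul_ncard_edgeSet (H.induce (S : Set V))
  have hdeg : ∑ v : (S : Set V), deg (H.induce (S : Set V)) v ≤ ∑ v ∈ S, deg H v := by
    rw [← Finset.sum_coe_sort S]
    refine Finset.sum_le_sum fun v _ => ?_
    rw [deg_induce]
    exact Set.ncard_le_ncard Set.inter_subset_left
  rw [Nat.card_coe_set_eq, Nat.card_coe_set_eq, Set.ncard_coe_finset] at hcard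
  rw [Finset.sum_sub_distrib, Finset.sum_const, nsmul_eq_mul, ← Nat.cast_sum]
  omega

theorem sum_two_sub_deg_eq_two {S : Finset V} (hS : H.support ⊆ S)
    (htree : (H.induce (S : Set V)).IsTree) : ∑ v ∈ S, (2 - deg H v : ℤ) = 2 := by
  classical
  have hcard := htree.card_edgeFinset
  have hsum := sum_deg_eq_two_mul_ncard_edgeSet (H.induce (S : Set V))
  have hdeg : ∑ v : (S : Set V), deg (H.induce (S : Set V)) v = ∑ v ∈ S, deg H v := by
    rw [← Finset.sum_coe_sort S]
    refine Finset.sum_congr rfl fun v _ => ?_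
    rw [deg_induce, Set.inter_eq_left.2 fun y hy => hS ⟨v, hy.symm⟩]
  rw [← coe_edgeFinset, Set.ncard_coe_finset] at hsum
  rw [← Nat.card_eq_fintype_card, Nat.card_coe_set_eq, Set.ncard_coe_finset] at hcard
  rw [Finset.sum_sub_distrib, Finset.sum_const, nsmul_eq_mul, ← Nat.cast_sum]
  omega

/-- The deficiencies `2 - deg v` add up to `2` over the tree and to at most `2` over a connected
piece of it; a piece without leaves of the tree contributes at most `0`. -/
theorem mul_card_add_two_le_of_isTree [Finite V] [DecidableEq V] {ι : Type*} [DecidableEq ι]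
    {S B X : Finset V} {n : ℕ} {f : V → ι} (hS : H.support ⊆ S)
    (htree : (H.induce (S : Set V)).IsTree) (hleaf : ∀ v ∈ S, v ∉ X → 2 ≤ deg H v)
    (hBS : B ⊆ S) (hB : ∀ v ∈ B, n + 2 ≤ deg H v)
    (hf : ∀ v ∈ S \ B,
      (H.induce (((S \ B).filter fun x => f x = f v : Finset V) : Set V)).Connected) :
    n * B.card + 2 ≤ 2 * (((S \ B) ∩ X).image f).card := by
  let g : V → ℤ := fun v => 2 - (deg H v : ℤ)
  have hB_sum : ∑ v ∈ B, g v ≤ -(n * B.card : ℤ) := by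
    have hle : ∑ v ∈ B, g v ≤ ∑ _v ∈ B, -(n : ℤ) := Finset.sum_le_sum fun v hv => by
      have := hB v hv
      simp only [g]
      omega
    simpa [mul_comm] using hle
  have hpiece : ∀ i ∈ (S \ B).image f, ∑ v ∈ (S \ B) with f v = i, g v ≤
      if i ∈ ((S \ B) ∩ X).image f then 2 else 0 := by
    intro i hi
    split_ifs with hiX
    · obtain ⟨v, hv, rfl⟩ := Finset.mem_image.1 hi
      exact sum_two_sub_deg_le_two (hf v hv)
    · refine Finset.sum_nonpos fun v hv => ?_
      obtain ⟨hvB, rfl⟩ := Finset.mem_filter.1 hv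
      have hvX : v ∉ X := fun h => hiX (Finset.mem_image_of_mem f (Finset.mem_inter.2 ⟨hvB, h⟩))
      have := hleaf v (Finset.sdiff_subset hvB) hvX
      simp only [g]
      omega
  have hrest : ∑ v ∈ S \ B, g v ≤ 2 * (((S \ B) ∩ X).image f).card := by
    rw [← Finset.sum_fiberwise_of_maps_to fun v hv => Finset.mem_image_of_mem f hv]
    refine (Finset.sum_le_sum hpiece).trans_eq ?_
    rw [Finset.sum_ite_mem, Finset.inter_eq_right.2 (Finset.image_mono f Finset.inter_subset_left),
      Finset.sum_const, nsmul_eq_mul, mul_comm]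
  have htotal : ∑ v ∈ S, g v = 2 := sum_two_sub_deg_eq_two hS htree
  have hsplit := Finset.sum_sdiff (f := g) hBS
  zify
  omega

end Counting

section InducedConnectivity

theorem reachable_inside_of_reachable (hD : ∀ x ∈ D, ∀ y, H.Adj x y → y ∈ D) (ha : a ∈ D)
    (hab : H.Reachable a b) : (inside H D).Reachable a b := by
  have hclosed : ∀ x ∈ {x | x ∈ D ∧ (inside H D).Reachable a x}, ∀ y, H.Adj x y →
      y ∈ {x | x ∈ D ∧ (inside H D).Reachable a x} := fun x ⟨hx, hax⟩ y hxy =>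
    ⟨hD x hx y hxy, hax.trans (Adj.reachable ⟨hxy, hx, hD x hx y hxy⟩)⟩
  exact (mem_of_reachable hclosed ⟨ha, .rfl⟩ hab).2

theorem connected_induce_of_reachable_inside (hC : C.Nonempty)
    (h : ∀ x ∈ C, ∀ y ∈ C, (inside H C).Reachable x y) : (H.induce C).Connected := by
  have := hC.to_subtype
  refine ⟨fun a b => ?_⟩
  have hclosed : ∀ x ∈ {x | ∃ hx : x ∈ C, (H.induce C).Reachable a ⟨x, hx⟩}, ∀ y,
      (inside H C).Adj x y → y ∈ {x | ∃ hx : x ∈ C, (H.induce C).Reachable a ⟨x, hx⟩} :=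
    fun x ⟨_, hax⟩ y hxy => ⟨hxy.2.2, hax.trans (Adj.reachable hxy.1)⟩
  exact (mem_of_reachable hclosed ⟨a.2, .rfl⟩ (h a a.2 b b.2)).2

theorem connected_induce_setOf_reachable : (H.induce {y | H.Reachable x y}).Connected := by
  refine connected_induce_of_reachable_inside ⟨x, .rfl⟩ fun a ha b hb => ?_
  exact reachable_inside_of_reachable (fun s hs t hst => hs.trans hst.reachable) ha
    (ha.symm.trans hb)

theorem IsFlexible.connected_induce (hC : IsFlexible G H d C) :
    (H.induce (C ∩ H.support)).Connected := by
  refine connected_induce_of_reachable_inside hC.nonempty fun x hx y hy => ?_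
  refine (hC.linked x hx y hy).mono fun s t hst => ?_
  exact ⟨hst.1, ⟨hst.2.1, t, hst.1⟩, hst.2.2, s, hst.1.symm⟩

end InducedConnectivity

section Connector

/-- `H` is a connector of `X`: all vertices of `X` lie in the same component of `H`. -/
abbrev IsConnector (X : Set V) (H : SimpleGraph V) : Prop := X.Pairwise H.Reachable

theorem isAcyclic_of_minimal_isConnector (hH : Minimal (IsConnector X) H) : H.IsAcyclic := by
  refine isAcyclic_iff_forall_adj_isBridge.2 fun u w huw hreach => ?_
  have hdel : IsConnector X (H.deleteEdges {s(u, w)}) := hH.prop.imp fun x y hxy => by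
    refine reachable_of_forall_adj (fun s t hst => ?_) hxy
    by_cases he : s(s, t) = s(u, w)
    · rcases Sym2.eq_iff.1 he with ⟨rfl, rfl⟩ | ⟨rfl, rfl⟩
      exacts [hreach, hreach.symm]
    · exact Adj.reachable (deleteEdges_adj.2 ⟨hst, he⟩)
  simpa using hH.le_of_le hdel (deleteEdges_le _) huw

theorem reachable_of_minimal_isConnector (hH : Minimal (IsConnector X) H) (hx : x ∈ X)
    (hv : v ∈ H.support) : H.Reachable x v := by
  have hinside : IsConnector X (inside H {y | H.Reachable x y}) := fun y hy z hz hyz => by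
    have hxy : H.Reachable x y := by
      rcases eq_or_ne x y with rfl | hne
      exacts [.rfl, hH.prop hx hy hne]
    exact reachable_inside_of_reachable (fun s hs t hst => hs.trans hst.reachable) hxy
      (hH.prop hy hz hyz)
  obtain ⟨w, hvw⟩ := hv
  exact (hH.le_of_le hinside (inside_le _ _) hvw).2.1

theorem two_le_deg_of_minimal_isConnector [Finite V] (hH : Minimal (IsConnector X) H)
    (hv : v ∈ H.support) (hvX : v ∉ X) : 2 ≤ deg H v := by
  by_contra! hdeg
  have hsub : (H.neighborSet v).Subsingleton :=
    Set.ncard_le_one_iff_subsingleton.1 (Nat.le_of_lt_succ hdeg)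
  have hinside : IsConnector X (inside H {v}ᶜ) := fun y hy z hz hyz => by
    obtain ⟨p, hp⟩ := (hH.prop hy hz hyz).exists_isPath
    have hvp : v ∉ p.support := hp.isTrail.not_mem_support_of_subsingleton_neighborSet
      (fun h => hvX (h ▸ hy)) (fun h => hvX (h ▸ hz)) hsub
    obtain ⟨q, -⟩ := exists_isPath_inside (D := {v}ᶜ) hp fun m hm h => hvp (h ▸ hm)
    exact ⟨q⟩
  obtain ⟨w, hvw⟩ := hv
  exact (hH.le_of_le hinside (inside_le _ _) hvw).2.1 rfl

theorem setOf_reachable_eq_support (hH : Minimal (IsConnector X) H) (hx : x ∈ X)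
    (hsupp : H.support.Nonempty) : {y | H.Reachable x y} = H.support := by
  obtain ⟨v, hv⟩ := hsupp
  refine Set.Subset.antisymm (fun y hxy => ?_) fun y => reachable_of_minimal_isConnector hH hx
  obtain ⟨p⟩ := (reachable_of_minimal_isConnector hH hx hv).symm.trans hxy
  exact mem_support_of_mem_support_walk hv p.end_mem_support

theorem isTree_induce_setOf_reachable (hH : Minimal (IsConnector X) H) :
    (H.induce {y | H.Reachable x y}).IsTree :=
  ⟨connected_induce_setOf_reachable, (isAcyclic_of_minimal_isConnector hH).induce _⟩

theorem exists_subgraph_isTree_of_minimal_isConnector (hH : Minimal (IsConnector X) H)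
    (hHG : H ≤ G) (hX : X.Nonempty) :
    ∃ T : G.Subgraph, X ⊆ T.verts ∧ T.coe.IsTree ∧ ∀ v, T.neighborSet v = H.neighborSet v := by
  obtain ⟨x, hx⟩ := hX
  let T : G.Subgraph :=
    { verts := {y | H.Reachable x y}
      Adj := H.Adj
      adj_sub := fun h => hHG h
      edge_vert := fun h => reachable_of_minimal_isConnector hH hx ⟨_, h⟩
      symm := H.symm }
  refine ⟨T, fun y hy => ?_, isTree_induce_setOf_reachable hH, fun v => rfl⟩
  rcases eq_or_ne x y with rfl | hne
  exacts [.rfl, hH.prop hx hy hne]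

end Connector

section Excess

variable [Fintype V]

/-- The total amount by which the degrees of `H` exceed `d`. -/
noncomputable def excess (d : ℕ) (H : SimpleGraph V) : ℕ := ∑ v, (deg H v - d)

theorem excess_mono (h : A ≤ B) : excess d A ≤ excess d B :=
  Finset.sum_le_sum fun _ _ => Nat.sub_le_sub_right (deg_mono h) d

theorem IsRelease.deg_le_of_excess_le (h : IsRelease G H d C v F)
    (hle : excess d H ≤ excess d F) : deg H v ≤ d := by
  by_contra! hv
  refine hle.not_gt (Finset.sum_lt_sum (fun x _ => ?_) ⟨v, Finset.mem_univ v, ?_⟩)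
  · have := h.deg_le x
    omega
  · have := h.deg_lt
    omega

theorem exists_minimal_isConnector_forall_excess_le (d : ℕ) (hX : IsConnector X G) :
    ∃ H ≤ G, Minimal (IsConnector X) H ∧
      ∀ F ≤ G, IsConnector X F → excess d H ≤ excess d F := by
  obtain ⟨H₀, ⟨hH₀G, hH₀⟩, hmin⟩ :=
    Set.exists_min_image {F | F ≤ G ∧ IsConnector X F} (excess d) (Set.toFinite _) ⟨G, le_rfl, hX⟩
  obtain ⟨H, hle, hH⟩ := exists_minimal_le_of_wellFoundedLT (IsConnector X) H₀ hH₀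
  exact ⟨H, hle.trans hH₀G, hH, fun F hFG hF => (excess_mono hle).trans (hmin F ⟨hFG, hF⟩)⟩

end Excess

section Toughness

theorem isCompOf_setOf_reachable (hx : x ∈ D) :
    IsCompOf G D {y | (inside G D).Reachable x y} := by
  have hsub : {y | (inside G D).Reachable x y} ⊆ D := fun _ =>
    mem_of_reachable (A := inside G D) (fun s _ t hst => hst.2.2) hx
  refine ⟨hsub, ⟨x, .rfl⟩, ?_, fun u hu w hw huw => ?_⟩
  · exact connected_induce_setOf_reachable.mono fun u w huw => inside_le G D huw
  · exact Reachable.trans hu (Adj.reachable ⟨huw, hsub hu, hw⟩)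

variable [Finite V]

theorem ncard_image_le_compCount {ι : Type*} {S : Set V} {f : V → ι}
    (hf : ∀ u ∉ S, ∀ w ∉ S, G.Adj u w → f u = f w) :
    (f '' (X \ S)).ncard ≤ compCount G S X := by
  obtain ⟨Y, hYX, hY⟩ := Set.exists_subset_bijOn (X \ S) f
  rw [← hY.image_eq, hY.injOn.ncard_image]
  refine Set.ncard_le_ncard_of_injOn (fun x => {y | (inside G Sᶜ).Reachable x y})
    (fun x hx => ⟨isCompOf_setOf_reachable (hYX hx).2, x, .rfl, (hYX hx).1⟩)
    fun x hx y hy hxy => hY.injOn hx hy ?_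
  have hreach : (inside G Sᶜ).Reachable x y := (Set.ext_iff.1 hxy y).2 .rfl
  exact mem_of_reachable (A := inside G Sᶜ) (C := {y | f x = f y})
    (fun s hs t hst => hs.trans (hf s hst.2.1 t hst.2.2 hst.1)) rfl hreach

theorem IsTough.isConnector {φ : ℝ} (hX : IsTough G X φ) (hφ : 0 < φ) : IsConnector X G := by
  intro x hx y hy _
  by_contra hreach
  have himage : 1 < (G.connectedComponentMk '' (X \ ∅)).ncard := by
    refine (Set.one_lt_ncard (Set.toFinite _)).2 ⟨_, ⟨x, ⟨hx, id⟩, rfl⟩, _, ⟨y, ⟨hy, id⟩, rfl⟩, ?_⟩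
    exact fun h => hreach (ConnectedComponent.eq.1 h)
  have hcount : 1 < compCount G ∅ X := himage.trans_le
    (ncard_image_le_compCount fun u _ w _ huw => ConnectedComponent.eq.2 huw.reachable)
  have hle := hX ∅ hcount
  rw [Set.ncard_empty, Nat.cast_zero] at hle
  exact hle.not_gt (mul_pos hφ (by exact_mod_cast zero_lt_one.trans hcount))

end Toughness

section RigidSet

variable {r : Setoid V}

/-- The vertices met by `H` whose class for `r` is not flexible; deleting them separates the
flexible classes from each other. -/
def rigidSet (G H : SimpleGraph V) (d : ℕ) (r : Setoid V) : Set V :=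
  {w | w ∈ H.support ∧ ¬IsFlexible G H d {x | r x w}}

/-- The class of `v` for `r` if this class is flexible, and the empty set otherwise. -/
def flexibleClass (G H : SimpleGraph V) (d : ℕ) (r : Setoid V) (v : V) : Set V :=
  {x | r x v ∧ IsFlexible G H d {y | r y v}}

theorem IsFlexiblePartition.le_deg (hr : IsFlexiblePartition G H d r) (hHG : H ≤ G)
    (hw : w ∈ rigidSet G H d r) : d ≤ deg H w := by
  by_contra! hdeg
  have hclass : {x | r x w} = {w} :=
    Set.ext fun x => ⟨(hr w).resolve_left hw.2 x, fun h => h ▸ r.refl w⟩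
  exact hw.2 (hclass ▸ isFlexible_singleton hHG hw.1 hdeg)

theorem flexibleClass_congr (h : r u w) : flexibleClass G H d r u = flexibleClass G H d r w := by
  have hrel : ∀ x, r x u ↔ r x w := fun x =>
    ⟨fun hx => r.trans hx h, fun hx => r.trans hx (r.symm h)⟩
  simp only [flexibleClass, hrel]

theorem flexibleClass_eq_of_adj [Finite V] (hr : Maximal (IsFlexiblePartition G H d) r)
    (hd : 2 ≤ d) (hH : ∀ x ∈ H.support, ∀ y ∈ H.support, H.Reachable x y)
    (hu : u ∉ rigidSet G H d r) (hw : w ∉ rigidSet G H d r) (huw : G.Adj u w) :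
    flexibleClass G H d r u = flexibleClass G H d r w := by
  by_cases hu' : IsFlexible G H d {x | r x u} <;> by_cases hw' : IsFlexible G H d {x | r x w}
  · exact flexibleClass_congr (IsFlexiblePartition.rel_of_adj_of_isFlexible hr hH hu' hw' huw)
  · exact absurd ⟨IsFlexiblePartition.mem_support_of_adj hr hd hu' hw' huw, hw'⟩ hw
  · exact absurd ⟨IsFlexiblePartition.mem_support_of_adj hr hd hw' hu' huw.symm, hu'⟩ hu
  · simp only [flexibleClass, hu', hw', and_false]

theorem connected_induce_setOf_flexibleClass_eq (hv : v ∈ H.support \ rigidSet G H d r) :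
    (H.induce {x | x ∈ H.support \ rigidSet G H d r ∧
      flexibleClass G H d r x = flexibleClass G H d r v}).Connected := by
  have hflex : IsFlexible G H d {x | r x v} := not_not.1 fun h => hv.2 ⟨hv.1, h⟩
  have hclass : {x | x ∈ H.support \ rigidSet G H d r ∧
      flexibleClass G H d r x = flexibleClass G H d r v} = {x | r x v} ∩ H.support := by
    ext x
    constructor
    · rintro ⟨hx, hxv⟩
      have hmem : v ∈ flexibleClass G H d r x := hxv ▸ ⟨r.refl v, hflex⟩
      exact ⟨r.symm hmem.1, hx.1⟩
    · rintro ⟨hxv, hx⟩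
      have hxclass := flexibleClass_congr (G := G) (H := H) (d := d) hxv
      have hmem : v ∈ flexibleClass G H d r x := hxclass ▸ ⟨r.refl v, hflex⟩
      exact ⟨⟨hx, fun h => h.2 hmem.2⟩, hxclass⟩
  rw [hclass]
  exact hflex.connected_induce

theorem mul_ncard_rigidSet_add_two_le [Finite V] {n : ℕ} (hHG : H ≤ G)
    (hH : Minimal (IsConnector X) H) (hX : X.Nonempty) (hsupp : H.support.Nonempty)
    (hr : Maximal (IsFlexiblePartition G H (n + 2)) r) :
    n * (rigidSet G H (n + 2) r).ncard + 2 ≤ 2 * compCount G (rigidSet G H (n + 2) r) X := by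
  classical
  obtain ⟨x, hx⟩ := hX
  have : Fintype V := Fintype.ofFinite V
  let f := flexibleClass G H (n + 2) r
  let S := H.support.toFinset
  let B := (rigidSet G H (n + 2) r).toFinset
  have hreach : ∀ {y}, y ∈ X → {z | H.Reachable y z} = H.support := fun hy =>
    setOf_reachable_eq_support hH hy hsupp
  have hXsupp : X ⊆ H.support := fun y hy => hreach hy ▸ Reachable.refl y
  have htree : (H.induce (S : Set V)).IsTree := by
    rw [Set.coe_toFinset, ← hreach hx]
    exact isTree_induce_setOf_reachable hH
  have hfibre : ∀ v ∈ S \ B,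
      (H.induce (((S \ B).filter fun x => f x = f v : Finset V) : Set V)).Connected := by
    intro v hv
    convert connected_induce_setOf_flexibleClass_eq (by simpa [S, B] using hv) <;> simp [S, B, f]
  have hcount : n * B.card + 2 ≤ 2 * (((S \ B) ∩ X.toFinset).image f).card :=
    mul_card_add_two_le_of_isTree (by simp [S]) htree
      (by simpa [S] using fun v hv => two_le_deg_of_minimal_isConnector hH hv)
      (Set.toFinset_subset_toFinset.2 fun v hv => hv.1)
      (by simpa [B] using fun v => hr.prop.le_deg hHG) hfibre
  have himage : (f '' (X \ rigidSet G H (n + 2) r)).ncard =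
      (((S \ B) ∩ X.toFinset).image f).card := by
    rw [← Set.ncard_coe_finset]
    push_cast [S, B, Set.coe_toFinset]
    rw [← Set.inter_sdiff_right_comm, Set.inter_eq_right.2 hXsupp]
  rw [← himage, ← Set.ncard_eq_toFinset_card'] at hcount
  refine hcount.trans (Nat.mul_le_mul_left 2 (ncard_image_le_compCount fun u hu w hw huw => ?_))
  refine flexibleClass_eq_of_adj hr (Nat.le_add_left 2 n) (fun y hy z hz => ?_) hu hw huw
  exact (reachable_of_minimal_isConnector hH hx hy).symm.trans
    (reachable_of_minimal_isConnector hH hx hz)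

end RigidSet

theorem IsFlexible.deg_le [Fintype V] (hC : IsFlexible G H d C) (hH : IsConnector X H)
    (hmin : ∀ F ≤ G, IsConnector X F → excess d H ≤ excess d F) (hv : v ∈ C) : deg H v ≤ d := by
  obtain ⟨F, hF⟩ := hC.exists_isRelease v hv
  exact hF.deg_le_of_excess_le (hmin F hF.le (hH.imp fun _ _ => hF.reachable_mono))

theorem exists_isTree_or_exists_mul_ncard_add_two_le [Finite V] (n : ℕ) (hX : X.Nonempty)
    (hconn : IsConnector X G) :
    (∃ T : G.Subgraph, X ⊆ T.verts ∧ T.coe.IsTree ∧ ∀ v, (T.neighborSet v).ncard ≤ n + 2) ∨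
      ∃ S : Set V, S.Nonempty ∧ n * S.ncard + 2 ≤ 2 * compCount G S X := by
  have : Fintype V := Fintype.ofFinite V
  obtain ⟨H, hHG, hH, hmin⟩ := exists_minimal_isConnector_forall_excess_le (n + 2) hconn
  by_cases hdeg : ∀ v, deg H v ≤ n + 2
  · obtain ⟨T, hXT, hT, hTH⟩ := exists_subgraph_isTree_of_minimal_isConnector hH hHG hX
    exact .inl ⟨T, hXT, hT, fun v => hTH v ▸ hdeg v⟩
  push Not at hdeg
  obtain ⟨v, hv⟩ := hdeg
  obtain ⟨r, hr⟩ := exists_maximal_isFlexiblePartition (G := G) (H := H) (d := n + 2)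
  have hvH : v ∈ H.support := Set.nonempty_of_ncard_ne_zero (Nat.ne_zero_of_lt hv)
  have hv_rigid : v ∈ rigidSet G H (n + 2) r :=
    ⟨hvH, fun hflex => hv.not_ge (hflex.deg_le hH.prop hmin (r.refl v))⟩
  exact .inr ⟨_, ⟨v, hv_rigid⟩, mul_ncard_rigidSet_add_two_le hHG hH hX ⟨v, hvH⟩ hr⟩

theorem stmt_8_general {V : Type*} [Finite V] {G : SimpleGraph V} {φ : ℝ} (hφ : 0 < φ)
    {X : Set V} (hXne : X.Nonempty) (hX : IsTough G X φ) :
    ∃ T : G.Subgraph, X ⊆ T.verts ∧ T.coe.IsTree ∧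
      ∀ v, (T.neighborSet v).ncard ≤ ⌈2 / φ⌉₊ + 2 := by
  refine (exists_isTree_or_exists_mul_ncard_add_two_le ⌈2 / φ⌉₊ hXne
    (hX.isConnector hφ)).resolve_right ?_
  rintro ⟨S, hS, hcount⟩
  have hSpos : 0 < S.ncard := hS.ncard_pos
  have hceil : 0 < ⌈2 / φ⌉₊ := Nat.ceil_pos.2 (by positivity)
  have htough := hX S (by nlinarith)
  have hφceil : 2 ≤ φ * ⌈2 / φ⌉₊ := (div_le_iff₀' hφ).1 (Nat.le_ceil _)
  have : 2 * (S.ncard : ℝ) < 2 * S.ncard := calc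
    2 * (S.ncard : ℝ) ≤ φ * ⌈2 / φ⌉₊ * S.ncard := by gcongr
    _ < φ * (⌈2 / φ⌉₊ * S.ncard + 2) := by linarith
    _ ≤ φ * (2 * compCount G S X) := by
      gcongr
      exact_mod_cast hcount
    _ ≤ 2 * S.ncard := by linarith
  exact this.false

/-- Any nonempty `φ`-tough set `X` admits a Steiner tree
spanning `X` of maximum degree at most `2/φ + 3`. -/
theorem stmt_8 (V : Type) [Fintype V] (G : SimpleGraph V) (φ : ℝ) (hφ : 0 < φ)
    (X : Set V) (hXne : X.Nonempty) (hX : IsTough G X φ) :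
    ∃ T : G.Subgraph, X ⊆ T.verts ∧ T.coe.IsTree ∧
      ∀ v ∈ T.verts, ((T.neighborSet v).ncard : ℝ) ≤ 2 / φ + 3 := by
  obtain ⟨T, hXT, hT, hdeg⟩ := stmt_8_general hφ hXne hX
  refine ⟨T, hXT, hT, fun v _ => ?_⟩
  have hceil := Nat.ceil_lt_add_one (a := 2 / φ) (by positivity)
  have hv : ((T.neighborSet v).ncard : ℝ) ≤ ⌈2 / φ⌉₊ + 2 := by exact_mod_cast hdeg v
  linarith
end

section
/- For every constant c ≥ 1 there is a constant C such that for all integers n ≥ 2 and f ≥ 1 there exists a decoder function D (depending only on n, f, and c) with the following property: for every finite simple graph G = (V,E) on n vertices there exists a finitely supported probability distribution over pairs of labeling functions (L_V : V → {0,1}^{b_V}, L_E : E → {0,1}^{b_E}) with b_V ≤ C·log₂ n and b_E ≤ f + C·log₂ n, such that for every fixed s,t ∈ V and F ⊆ E with |F| ≤ f, with probability at least 1 − n^{−c} over the random labeling, D applied to (L_V(s), L_V(t), {L_E(e) : e ∈ F}) outputs true if and only if s and t lie in the same connected component of G − F. -/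
open scoped Classical

/-!
By duality, a set of edges on which every vector of the mod-2 cycle space sums to zero behaves like
a cut: the parity with which it is crossed by a walk depends only on the ends of the walk. Hence two
vertices `s`, `t` joined by a walk in `G` are separated in `G - F` iff some such subset of `F` is
crossed oddly by that walk.

Random cycle space vectors recognise these subsets: each edge is labelled by its coordinates in
`f + c log n` of them, and a subset of `F` which is not orthogonal to the cycle space escapes
detection with probability at most `2 ^ -(f + c log n)`, so that a union bound over the at most
`2 ^ f` subsets suffices.

It remains to encode in `O(log n)` bits, for every edge, how often it occurs modulo 2 on a chosen
walk to each vertex. Take a closed tour of a spanning tree that uses each of its edges twice, and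
walk along it until the vertex is first met: a tree edge has been used an odd number of times
exactly when this happens between its two traversals. So a position suffices for a vertex, and an
interval of positions for an edge.
-/

namespace ConnectivityLabeling

open Finset

section Walks

variable {V : Type*} [DecidableEq V] {G : SimpleGraph V} {r u v w : V}

/-- The mod-2 edge vector of a walk: how often each edge is traversed, modulo 2. -/
def walkParity (p : G.Walk u v) (e : Sym2 V) : ZMod 2 := p.edges.count e

lemma walkParity_cons (h : G.Adj u v) (p : G.Walk v w) :
    walkParity (.cons h p) = walkParity p + Pi.single s(u, v) 1 := by
  ext e
  by_cases he : s(u, v) = e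
  · subst he
    simp [walkParity]
  · simp [walkParity, List.count_cons_of_ne he, Pi.single_eq_of_ne' he]

lemma walkParity_reverse_append (p : G.Walk r u) (q : G.Walk r v) :
    walkParity (p.reverse.append q) = walkParity p + walkParity q := by
  ext e
  simp [walkParity]

lemma walkParity_eq_zero_of_notMem {p : G.Walk u v} {e : Sym2 V} (he : e ∉ p.edges) :
    walkParity p e = 0 := by
  simp [walkParity, List.count_eq_zero_of_not_mem he]

end Walks

section CycleSpace

variable {V : Type*} [Fintype V] {G : SimpleGraph V} {s t u v : V}

/-- The cut of a two-colouring `x` of the vertices: the edges of `G` whose ends get different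
colours. -/
noncomputable def cut (G : SimpleGraph V) (x : V → ZMod 2) : Finset (Sym2 V) :=
  {e ∈ G.edgeFinset | ¬ (e.map x).IsDiag}

lemma mk_mem_cut {x : V → ZMod 2} : s(u, v) ∈ cut G x ↔ G.Adj u v ∧ x u ≠ x v := by
  simp [cut]

/-- The cycle space of `G` over `ZMod 2`: the edge vectors orthogonal to every cut. Vectors are
indexed by all of `Sym2 V`, and their entries outside the edge set of `G` are unconstrained. -/
def cycleSpace (G : SimpleGraph V) : AddSubgroup (Sym2 V → ZMod 2) where
  carrier := {z | ∀ x, ∑ e ∈ cut G x, z e = 0}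
  zero_mem' := by simp
  add_mem' hy hz x := by simp [sum_add_distrib, hy x, hz x]
  neg_mem' hz x := by simp [hz x]

lemma exists_cut_subset_of_not_reachable {F : Finset (Sym2 V)}
    (h : ¬ (G.deleteEdges (F : Set (Sym2 V))).Reachable s t) :
    ∃ x : V → ZMod 2, cut G x ⊆ F ∧ x s + x t = 1 := by
  let H := G.deleteEdges (F : Set (Sym2 V))
  refine ⟨fun v => if H.Reachable s v then 1 else 0, fun e he => ?_, by simp [H, h]⟩
  induction e with | _ a b
  obtain ⟨hadj, hne⟩ := mk_mem_cut.1 he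
  by_contra hF
  have hH : H.Adj a b := by simp [H, hadj, hF]
  have : H.Reachable s a ↔ H.Reachable s b :=
    ⟨fun ha => ha.trans hH.reachable, fun hb => hb.trans hH.symm.reachable⟩
  exact hne (by simp only [this])

variable [DecidableEq V]

lemma sum_cut_walkParity (x : V → ZMod 2) (p : G.Walk u v) :
    ∑ e ∈ cut G x, walkParity p e = x u + x v := by
  induction p with
  | nil => simp [walkParity, CharTwo.add_self_eq_zero]
  | @cons a b c h p ih =>
    have hab : (if s(a, b) ∈ cut G x then 1 else 0) = x a + x b := by
      simp only [mk_mem_cut, h, true_and]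
      generalize x a = i, x b = j
      decide +revert
    simp only [walkParity_cons, Pi.add_apply, sum_add_distrib, ih, sum_pi_single', hab]
    linear_combination CharTwo.add_self_eq_zero (x b)

lemma walkParity_add_mem_cycleSpace (p q : G.Walk u v) :
    walkParity p + walkParity q ∈ cycleSpace G := fun x => by
  simp [sum_add_distrib, sum_cut_walkParity, CharTwo.add_self_eq_zero]

theorem reachable_deleteEdges_iff (q : G.Walk s t) (F : Finset (Sym2 V)) :
    (G.deleteEdges (F : Set (Sym2 V))).Reachable s t ↔
      ∀ F' ⊆ F, (∀ z ∈ cycleSpace G, ∑ e ∈ F', z e = 0) → ∑ e ∈ F', walkParity q e = 0 := by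
  constructor
  · rintro ⟨p⟩ F' hF' horth
    let p' : G.Walk s t := p.mapLe (G.deleteEdges_le _)
    have hp' : ∀ e ∈ F', walkParity p' e = 0 := fun e he =>
      walkParity_eq_zero_of_notMem fun hep => by
        have := p.edges_subset_edgeSet (by simpa [p'] using hep)
        simp [hF' he] at this
    simpa [sum_add_distrib, sum_eq_zero hp'] using horth _ (walkParity_add_mem_cycleSpace q p')
  · intro h
    by_contra hst
    obtain ⟨x, hxF, hx⟩ := exists_cut_subset_of_not_reachable hst
    have := h _ hxF fun z hz => hz x
    simp [sum_cut_walkParity, hx] at this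

end CycleSpace

section Tours

variable {V : Type*} {G : SimpleGraph V} {r u v : V}

/-- Insert into the closed walk `p`, at its first visit to `u`, a step to the neighbour `v` and
back. -/
def detour [DecidableEq V] (p : G.Walk r r) (hu : u ∈ p.support) (h : G.Adj u v) : G.Walk r r :=
  (p.takeUntil u hu).append (.cons h (.cons h.symm (p.dropUntil u hu)))

variable [DecidableEq V]

lemma edges_detour_perm (p : G.Walk r r) (hu : u ∈ p.support) (h : G.Adj u v) :
    (detour p hu h).edges.Perm (s(u, v) :: s(u, v) :: p.edges) := by
  have hp : p.edges = (p.takeUntil u hu).edges ++ (p.dropUntil u hu).edges := by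
    rw [← SimpleGraph.Walk.edges_append, p.take_spec hu]
  simp only [detour, SimpleGraph.Walk.edges_append, SimpleGraph.Walk.edges_cons,
    Sym2.eq_swap (a := v), hp]
  exact List.perm_middle.trans (List.perm_middle.cons _)

lemma toFinset_support_detour (p : G.Walk r r) (hu : u ∈ p.support) (h : G.Adj u v) :
    (detour p hu h).support.toFinset = insert v p.support.toFinset := by
  ext y
  have hy : y ∈ p.support ↔ y ∈ (p.takeUntil u hu).support ∨ y ∈ (p.dropUntil u hu).support := by
    rw [← SimpleGraph.Walk.mem_support_append_iff, p.take_spec hu]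
  have := (p.takeUntil u hu).end_mem_support
  simp only [detour, List.mem_toFinset, SimpleGraph.Walk.mem_support_append_iff,
    SimpleGraph.Walk.support_cons, List.mem_cons, mem_insert, hy]
  grind

/-- A closed walk around a tree, as in a depth-first traversal: every edge is used twice or not at
all, and a tree with `k` vertices is toured in `2 (k - 1)` steps. -/
structure IsTreeTour (p : G.Walk r r) : Prop where
  count_edges (e : Sym2 V) : p.edges.count e = 0 ∨ p.edges.count e = 2
  length_add_two : p.length + 2 = 2 * #p.support.toFinset

lemma isTreeTour_nil : IsTreeTour (.nil : G.Walk r r) := ⟨by simp, by simp⟩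

lemma IsTreeTour.detour {p : G.Walk r r} (hp : IsTreeTour p) (hu : u ∈ p.support)
    (h : G.Adj u v) (hv : v ∉ p.support) : IsTreeTour (detour p hu h) where
  count_edges e := by
    rw [(edges_detour_perm p hu h).count_eq]
    by_cases he : s(u, v) = e
    · subst he
      have : s(u, v) ∉ p.edges := fun he => hv (p.snd_mem_support_of_mem_edges he)
      simp [List.count_eq_zero_of_not_mem this]
    · simpa [List.count_cons_of_ne he] using hp.count_edges e
  length_add_two := by
    rw [← SimpleGraph.Walk.length_edges, (edges_detour_perm p hu h).length_eq,
      toFinset_support_detour, card_insert_of_notMem (by simpa using hv)]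
    simp only [List.length_cons, SimpleGraph.Walk.length_edges]
    linarith [hp.length_add_two]

lemma exists_isTreeTour [Finite V] (G : SimpleGraph V) (r : V) :
    ∃ p : G.Walk r r, IsTreeTour p ∧ ∀ v, G.Reachable r v → v ∈ p.support := by
  obtain ⟨p, hp, hmax⟩ := Set.Finite.exists_maximalFor'
    (fun p : G.Walk r r => p.support.toFinset) {p | IsTreeTour p} (Set.toFinite _)
    ⟨_, isTreeTour_nil⟩
  refine ⟨p, hp, fun v ⟨q⟩ => ?_⟩
  by_contra hv
  obtain ⟨d, _, hfst, hsnd⟩ := q.exists_boundary_dart {y | y ∈ p.support} (by simp) hv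
  have hle := hmax (hp.detour hfst d.adj hsnd)
  simp only [toFinset_support_detour, subset_insert, insert_subset_iff,
    List.mem_toFinset, forall_const] at hle
  exact hsnd hle.1

end Tours

section Intervals

lemma count_take_append_cons {α : Type*} [DecidableEq α] {e : α} {l₁ : List α} (h : e ∉ l₁)
    (l₂ : List α) (k : ℕ) : ((l₁ ++ e :: l₂).take k).count e =
      if k ≤ l₁.length then 0 else (l₂.take (k - l₁.length - 1)).count e + 1 := by
  have h₀ : (l₁.take k).count e = 0 :=
    List.count_eq_zero_of_not_mem fun he => h (List.mem_of_mem_take he)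
  rw [List.take_append, List.count_append, h₀, zero_add]
  split_ifs with hk
  · simp [Nat.sub_eq_zero_of_le hk]
  · rw [List.take_cons (by omega), List.count_cons_self]

lemma exists_interval_count_take {α : Type*} [DecidableEq α] {e : α} {l : List α}
    (h : l.count e = 0 ∨ l.count e = 2) :
    ∃ a ≤ l.length, ∃ b ≤ l.length, ∀ k,
      ((l.take k).count e : ZMod 2) = if a < k ∧ k ≤ b then 1 else 0 := by
  obtain h | h := h
  · refine ⟨0, zero_le, 0, zero_le, fun k => ?_⟩
    have hk : (l.take k).count e = 0 := Nat.le_zero.1 (h ▸ (List.take_sublist k l).count_le e)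
    rw [hk, Nat.cast_zero, if_neg (by omega)]
  · obtain ⟨l₁, l', rfl, h₁⟩ := List.eq_append_cons_of_mem (List.count_pos_iff.1 (h ▸ two_pos))
    have h' : l'.count e = 1 := by simpa [List.count_eq_zero_of_not_mem h₁] using h
    obtain ⟨l₂, l₃, rfl, h₂⟩ :=
      List.eq_append_cons_of_mem (List.count_pos_iff.1 (h'.symm ▸ one_pos))
    have h₃ : e ∉ l₃ := List.count_eq_zero.1 <| by
      simpa [List.count_eq_zero_of_not_mem h₂] using h'
    refine ⟨l₁.length, by simp, l₁.length + 1 + l₂.length, by simp; omega, fun k => ?_⟩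
    have hk : e ∉ l₃.take (k - l₁.length - 1 - l₂.length - 1) := fun he =>
      h₃ (List.mem_of_mem_take he)
    rw [count_take_append_cons h₁, count_take_append_cons h₂, List.count_eq_zero_of_not_mem hk]
    split_ifs <;> first | omega | rfl

end Intervals

section Labels

variable {V : Type*} [Fintype V] {G : SimpleGraph V}

/-- A place on one of the closed tours, one for each component: the root of the tour and the number
of steps taken from it. -/
abbrev Position (V : Type*) [Fintype V] := V × Fin (2 * Fintype.card V)

/-- A stretch of a closed tour: its root and the step numbers `a`, `b` of a half-open interval
`(a, b]`. -/
abbrev Stretch (V : Type*) [Fintype V] :=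
  V × Fin (2 * Fintype.card V) × Fin (2 * Fintype.card V)

/-- The indicator, with values in `ZMod 2`, of a position lying on a stretch. -/
noncomputable def crossing (I : Stretch V) (p : Position V) : ZMod 2 :=
  if I.1 = p.1 ∧ I.2.1 < p.2 ∧ p.2 ≤ I.2.2 then 1 else 0

/-- A vertex chosen to represent the connected component of `v`. -/
noncomputable def componentRoot {V : Type*} (G : SimpleGraph V) (v : V) : V :=
  (G.connectedComponentMk v).out

lemma reachable_componentRoot {V : Type*} (G : SimpleGraph V) (v : V) :
    G.Reachable (componentRoot G v) v :=
  SimpleGraph.ConnectedComponent.eq.1 (Quot.out_eq _)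

lemma componentRoot_eq_iff {V : Type*} {G : SimpleGraph V} {u v : V} :
    componentRoot G u = componentRoot G v ↔ G.Reachable u v := by
  refine ⟨fun h => ?_, fun h => congrArg Quot.out (SimpleGraph.ConnectedComponent.eq.2 h)⟩
  exact (reachable_componentRoot G u).symm.trans (h ▸ reachable_componentRoot G v)

lemma IsTreeTour.length_lt [DecidableEq V] {r : V} {p : G.Walk r r} (hp : IsTreeTour p) :
    p.edges.length < 2 * Fintype.card V := by
  have := card_le_univ p.support.toFinset
  have := hp.length_add_two
  rw [SimpleGraph.Walk.length_edges]
  omega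

/-- Positions of the vertices and stretches of the edges which encode, for every vertex `v`, the
edge vector of a walk from the root of its component to `v`. -/
structure IsTourLabeling [DecidableEq V] (G : SimpleGraph V) (pos : V → Position V)
    (str : Sym2 V → Stretch V) : Prop where
  root_eq_iff (u v : V) : (pos u).1 = (pos v).1 ↔ G.Reachable u v
  exists_walk (v : V) : ∃ p : G.Walk (pos v).1 v, ∀ e, walkParity p e = crossing (str e) (pos v)

theorem exists_isTourLabeling [DecidableEq V] (G : SimpleGraph V) :
    ∃ pos str, IsTourLabeling G pos str := by
  choose tour htour hcover using exists_isTreeTour G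
  choose a ha b hb hab using fun r e => exists_interval_count_take ((htour r).count_edges e)
  let root := componentRoot G
  let w (v : V) := tour (root v)
  have hmem (v : V) : v ∈ (w v).support := hcover _ _ (reachable_componentRoot G v)
  have hidx (v : V) : (w v).support.idxOf v < 2 * Fintype.card V := by
    have := List.idxOf_lt_length_of_mem (hmem v)
    have := (htour (root v)).length_lt
    simp only [SimpleGraph.Walk.length_support, SimpleGraph.Walk.length_edges, w] at *
    omega
  refine ⟨fun v => (root v, ⟨_, hidx v⟩), fun e => (root e.out.1,
    ⟨_, (ha (root e.out.1) e).trans_lt (htour _).length_lt⟩,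
    ⟨_, (hb (root e.out.1) e).trans_lt (htour _).length_lt⟩),
    fun _ _ => componentRoot_eq_iff, fun v => ⟨(w v).takeUntil v (hmem v), fun e => ?_⟩⟩
  by_cases he : root e.out.1 = root v
  · have hedges : ((w v).takeUntil v (hmem v)).edges =
        (w v).edges.take ((w v).support.idxOf v) := by
      simp [SimpleGraph.Walk.takeUntil_eq_take, SimpleGraph.Walk.edges_take]
    simp [walkParity, crossing, hedges, hab, he, w]
  · rw [walkParity_eq_zero_of_notMem]
    · simp [crossing, he]
    · intro hmem
      have hsupp := SimpleGraph.Walk.mem_support_of_mem_edges hmem e.out_fst_mem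
      refine he (componentRoot_eq_iff.2 (.trans (.symm ?_) (reachable_componentRoot G v)))
      exact (SimpleGraph.Walk.takeUntil _ _ hsupp).reachable

end Labels

section Sampling

lemma two_mul_card_ker_le {A B : Type*} [AddGroup A] [Finite A] [AddGroup B] {φ : A →+ B}
    (hφ : φ ≠ 0) : 2 * Nat.card φ.ker ≤ Nat.card A := by
  have hker : φ.ker ≠ ⊤ := fun h => hφ (AddMonoidHom.ker_eq_top_iff.1 h)
  rw [← φ.ker.card_mul_index, mul_comm]
  exact Nat.mul_le_mul_left _ (φ.ker.one_lt_index_of_ne_top hker)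

lemma two_pow_mul_card_exists_vanishing_le {A B ι κ : Type*} [AddGroup A] [Fintype A]
    [AddGroup B] [Fintype κ] [DecidableEq κ] (S : Finset ι) (φ : ι → A →+ B) :
    2 ^ Fintype.card κ * #{ω : κ → A | ∃ i ∈ S, φ i ≠ 0 ∧ ∀ k, φ i (ω k) = 0} ≤
      #S * Fintype.card (κ → A) := by
  have hsub : ({ω : κ → A | ∃ i ∈ S, φ i ≠ 0 ∧ ∀ k, φ i (ω k) = 0} : Finset _) ⊆
      {i ∈ S | φ i ≠ 0}.biUnion fun i => Fintype.piFinset fun _ => {a | φ i a = 0} := by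
    intro ω
    simp only [mem_filter, mem_univ, mem_biUnion, Fintype.mem_piFinset, true_and]
    tauto
  have hcard (i : ι) : #{a | φ i a = 0} = Nat.card (φ i).ker := by
    simp [Nat.card_eq_fintype_card, Fintype.card_subtype, AddMonoidHom.mem_ker]
  calc 2 ^ Fintype.card κ * #{ω : κ → A | ∃ i ∈ S, φ i ≠ 0 ∧ ∀ k, φ i (ω k) = 0}
      ≤ 2 ^ Fintype.card κ * ∑ i ∈ S with φ i ≠ 0, Nat.card (φ i).ker ^ Fintype.card κ := by
        gcongr
        simpa [hcard] using (card_le_card hsub).trans card_biUnion_le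
    _ = ∑ i ∈ S with φ i ≠ 0, (2 * Nat.card (φ i).ker) ^ Fintype.card κ := by
        simp_rw [mul_sum, mul_pow]
    _ ≤ ∑ i ∈ S with φ i ≠ 0, Nat.card A ^ Fintype.card κ := by
        gcongr with i hi
        exact two_mul_card_ker_le (mem_filter.1 hi).2
    _ ≤ #S * Fintype.card (κ → A) := by
        rw [sum_const, smul_eq_mul, Nat.card_eq_fintype_card, ← Fintype.card_fun]
        gcongr
        exact filter_subset _ _

end Sampling

section Decoding

variable {V β κ : Type*} [Fintype V]

/-- The decoder's test for positions `p`, `q` of two vertices and a set `S` of faulty edges with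
sketches `sketch` and stretches `str`: the vertices lie in the same component before the faults, and
no subset of `S` that looks like a cut, in that its sketches sum to zero, is crossed an odd number
of times between them. -/
def Connects (sketch : β → κ → ZMod 2) (str : β → Stretch V) (p q : Position V)
    (S : Finset β) : Prop :=
  p.1 = q.1 ∧ ∀ S' ⊆ S, ∑ y ∈ S', sketch y = 0 →
    ∑ y ∈ S', (crossing (str y) p + crossing (str y) q) = 0

lemma connects_image {α : Type*} [DecidableEq β] {g : α → β} (hg : Function.Injective g)
    {sketch : β → κ → ZMod 2} {str : β → Stretch V} {p q : Position V} {S : Finset α} :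
    Connects sketch str p q (S.image g) ↔ Connects (sketch ∘ g) (str ∘ g) p q S := by
  refine and_congr_right fun _ => ⟨fun h S' hS' => ?_, fun h T hT => ?_⟩
  · simpa [sum_image hg.injOn] using h _ (image_subset_image hS')
  · obtain ⟨S', hS', rfl⟩ := subset_image_iff.1 hT
    simpa [sum_image hg.injOn] using h S' (mod_cast hS')

/-- The sum over the edges in `F`, as a functional on the cycle space. -/
def edgeSum (G : SimpleGraph V) (F : Finset (Sym2 V)) : cycleSpace G →+ ZMod 2 where
  toFun z := ∑ e ∈ F, z.1 e
  map_zero' := by simp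
  map_add' := by simp [sum_add_distrib]

/-- The sketch of an edge: its coordinates in a sampled family of cycle space vectors. -/
def edgeSketch {G : SimpleGraph V} (ω : κ → cycleSpace G) (e : Sym2 V) (k : κ) : ZMod 2 := (ω k).1 e

lemma edgeSum_eq_zero_iff {G : SimpleGraph V} {F : Finset (Sym2 V)} :
    edgeSum G F = 0 ↔ ∀ z ∈ cycleSpace G, ∑ e ∈ F, z e = 0 := by
  simp [DFunLike.ext_iff, edgeSum]

lemma sum_edgeSketch_eq_zero_iff {G : SimpleGraph V} {ω : κ → cycleSpace G}
    {F : Finset (Sym2 V)} :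
    ∑ e ∈ F, edgeSketch ω e = 0 ↔ ∀ k, edgeSum G F (ω k) = 0 := by
  simp [funext_iff, edgeSketch, edgeSum]

variable [DecidableEq V] {G : SimpleGraph V} {pos : V → Position V} {str : Sym2 V → Stretch V}

lemma IsTourLabeling.exists_walk_of_root_eq (h : IsTourLabeling G pos str) {s t : V}
    (hst : (pos s).1 = (pos t).1) : ∃ w : G.Walk s t, ∀ e,
      walkParity w e = crossing (str e) (pos s) + crossing (str e) (pos t) := by
  obtain ⟨p, hp⟩ := h.exists_walk s
  obtain ⟨q, hq⟩ := h.exists_walk t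
  refine ⟨p.reverse.append (q.copy hst.symm rfl), fun e => ?_⟩
  rw [walkParity_reverse_append, Pi.add_apply, hp, ← hq]
  simp [walkParity]

lemma IsTourLabeling.connects_iff_reachable (h : IsTourLabeling G pos str) (ω : κ → cycleSpace G)
    (s t : V) (F : Finset (Sym2 V))
    (hω : ∀ F' ⊆ F, (∀ k, edgeSum G F' (ω k) = 0) → edgeSum G F' = 0) :
    Connects (edgeSketch ω) str (pos s) (pos t) F ↔
      (G.deleteEdges (F : Set (Sym2 V))).Reachable s t := by
  have hsketch : ∀ F' ⊆ F,
      (∑ e ∈ F', edgeSketch ω e = 0 ↔ ∀ z ∈ cycleSpace G, ∑ e ∈ F', z e = 0) := by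
    intro F' hF'
    rw [sum_edgeSketch_eq_zero_iff, ← edgeSum_eq_zero_iff]
    exact ⟨hω F' hF', fun h k => by simp [h]⟩
  by_cases hst : (pos s).1 = (pos t).1
  · obtain ⟨w, hw⟩ := h.exists_walk_of_root_eq hst
    simp only [Connects, hst, true_and, ← hw, reachable_deleteEdges_iff w]
    exact forall₂_congr fun F' hF' => by rw [hsketch F' hF']
  · refine iff_of_false (fun hC => hst hC.1) fun hR => hst ?_
    exact (h.root_eq_iff s t).2 (hR.mono (G.deleteEdges_le _))

theorem IsTourLabeling.two_pow_mul_card_failure_le [Fintype κ] [DecidableEq κ]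
    (h : IsTourLabeling G pos str) (s t : V) (F : Finset (Sym2 V)) :
    2 ^ Fintype.card κ * #{ω : κ → cycleSpace G | ¬ (Connects (edgeSketch ω) str (pos s) (pos t) F ↔
      (G.deleteEdges (F : Set (Sym2 V))).Reachable s t)} ≤
      2 ^ #F * Fintype.card (κ → cycleSpace G) := by
  rw [← card_powerset]
  refine le_trans ?_ (two_pow_mul_card_exists_vanishing_le F.powerset (edgeSum G))
  gcongr with ω
  intro hfail
  by_contra! hω
  refine hfail (h.connects_iff_reachable ω s t F fun F' hF' hk => ?_)
  by_contra hne
  obtain ⟨k, hk'⟩ := hω F' (mem_powerset.2 hF') hne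
  exact hk' (hk k)

theorem IsTourLabeling.two_pow_mul_card_failure_le_card (h : IsTourLabeling G pos str) (s t : V)
    {F : Finset (Sym2 V)} {f : ℕ} (hF : #F ≤ f) (m : ℕ) :
    2 ^ m * #{ω : Fin (f + m) → cycleSpace G |
      ¬ (Connects (edgeSketch ω) str (pos s) (pos t) F ↔
        (G.deleteEdges (F : Set (Sym2 V))).Reachable s t)} ≤
      Fintype.card (Fin (f + m) → cycleSpace G) := by
  have hfail := h.two_pow_mul_card_failure_le (κ := Fin (f + m)) s t F
  have hpow : 2 ^ #F ≤ 2 ^ f := Nat.pow_le_pow_right two_pos hF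
  rw [Fintype.card_fin, pow_add, mul_assoc] at hfail
  exact Nat.le_of_mul_le_mul_left (hfail.trans (Nat.mul_le_mul_right _ hpow)) (pow_pos two_pos f)

end Decoding

section Coding

lemma exists_code {α : Type*} [Fintype α] [Nonempty α] {k : ℕ} (h : Fintype.card α ≤ 2 ^ k) :
    ∃ (enc : α → Fin k → Bool) (dec : (Fin k → Bool) → α), Function.LeftInverse dec enc := by
  obtain ⟨enc⟩ : Nonempty (α ↪ (Fin k → Bool)) :=
    Function.Embedding.nonempty_of_card_le (by simpa using h)
  exact ⟨enc, _, Function.leftInverse_invFun enc.injective⟩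

lemma clog_le_two_mul_logb {n : ℕ} (hn : 2 ≤ n) : (Nat.clog 2 n : ℝ) ≤ 2 * Real.logb 2 n := by
  have hlog : 1 ≤ Real.logb 2 n := by
    rw [Real.le_logb_iff_rpow_le one_lt_two (by positivity), Real.rpow_one]
    exact_mod_cast hn
  have hceil : ⌈Real.logb 2 n⌉₊ = Nat.clog 2 n := mod_cast Real.natCeil_logb_natCast 2 n
  rw [← hceil]
  linarith [Nat.ceil_lt_add_one (zero_le_one.trans hlog)]

lemma inv_two_pow_le_rpow_neg (c : ℝ) {n L : ℕ} (hn : 1 ≤ n) (hL : n ≤ 2 ^ L) :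
    ((2 ^ (⌈c⌉₊ * L) : ℕ) : ℝ)⁻¹ ≤ (n : ℝ) ^ (-c) := by
  rw [Real.rpow_neg (by positivity), Nat.cast_pow, Nat.cast_ofNat]
  gcongr
  calc (n : ℝ) ^ c ≤ (n : ℝ) ^ (⌈c⌉₊ : ℝ) :=
        Real.rpow_le_rpow_of_exponent_le (mod_cast hn) (Nat.le_ceil c)
    _ = (n : ℝ) ^ ⌈c⌉₊ := Real.rpow_natCast _ _
    _ ≤ ((2 : ℝ) ^ L) ^ ⌈c⌉₊ := by gcongr; exact_mod_cast hL
    _ = 2 ^ (⌈c⌉₊ * L) := by rw [← pow_mul, mul_comm]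

lemma exists_uniform_weights (Ω : Type*) [Fintype Ω] [Nonempty Ω] :
    ∃ (N : ℕ) (μ : Fin N → ℝ) (X : Fin N → Ω), (∀ i, 0 ≤ μ i) ∧ ∑ i, μ i = 1 ∧
      ∀ (P : Ω → Prop) [DecidablePred P] (K : ℕ), 0 < K → K * #{x | ¬ P x} ≤ Fintype.card Ω →
        1 - (K : ℝ)⁻¹ ≤ ∑ i with P (X i), μ i := by
  have hpos : (0 : ℝ) < Fintype.card Ω := mod_cast Fintype.card_pos
  let X := (Fintype.equivFin Ω).symm
  refine ⟨Fintype.card Ω, fun _ => (Fintype.card Ω : ℝ)⁻¹, X, fun _ => by positivity, ?_,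
    fun P _ K hK hbad => ?_⟩
  · simp [hpos.ne']
  have hcard : #{i | P (X i)} = #{x | P x} := card_equiv X (by simp)
  have hsplit : (#{x | P x} : ℝ) + #{x | ¬ P x} = Fintype.card Ω := by
    exact_mod_cast card_filter_add_card_filter_not (s := univ) P
  rw [sum_const, nsmul_eq_mul, hcard, ← div_eq_mul_inv, le_div_iff₀ hpos, sub_mul, one_mul]
  have hfail : (#{x | ¬ P x} : ℝ) ≤ (K : ℝ)⁻¹ * Fintype.card Ω :=
    (le_inv_mul_iff₀ (mod_cast hK)).2 (mod_cast hbad)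
  linarith

variable {n L : ℕ}

lemma card_position_le (hn : 2 ≤ n) (hL : n ≤ 2 ^ L) :
    Fintype.card (Position (Fin n)) ≤ 2 ^ (3 * L) := by
  simp only [Fintype.card_prod, Fintype.card_fin]
  calc n * (2 * n) ≤ n * (n * n) := by gcongr
    _ = n ^ 3 := by ring
    _ ≤ (2 ^ L) ^ 3 := by gcongr
    _ = 2 ^ (3 * L) := by rw [← pow_mul, mul_comm]

lemma card_edgeLabel_le (hn : 2 ≤ n) (hL : n ≤ 2 ^ L) (b : ℕ) :
    Fintype.card ((Fin b → ZMod 2) × Stretch (Fin n) × Sym2 (Fin n)) ≤ 2 ^ (b + 7 * L) := by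
  have hid : Fintype.card (Sym2 (Fin n)) ≤ n * n := by
    simpa using Fintype.card_le_of_surjective _ (Sym2.mk_surjective (α := Fin n))
  simp only [Fintype.card_prod, Fintype.card_fun, ZMod.card, Fintype.card_fin]
  calc 2 ^ b * (n * (2 * n * (2 * n)) * Fintype.card (Sym2 (Fin n)))
      ≤ 2 ^ b * (n * (n * n * (n * n)) * (n * n)) := by gcongr
    _ = 2 ^ b * n ^ 7 := by ring
    _ ≤ 2 ^ b * (2 ^ L) ^ 7 := by gcongr
    _ = 2 ^ (b + 7 * L) := by rw [← pow_mul, ← pow_add, mul_comm L]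

end Coding

end ConnectivityLabeling

open ConnectivityLabeling

/-- Randomized edge-fault connectivity labels with
`O(log n)`-bit vertex labels and `(f + O(log n))`-bit edge labels, answering
each fixed query correctly with probability at least `1 − n^{−c}`. -/
theorem stmt_13 :
    ∀ c : ℝ, 1 ≤ c → ∃ C : ℝ, ∀ n f : ℕ, 2 ≤ n → 1 ≤ f →
      ∃ bV bE : ℕ,
        (bV : ℝ) ≤ C * Real.logb 2 n ∧
        (bE : ℝ) ≤ (f : ℝ) + C * Real.logb 2 n ∧
        ∃ D : (Fin bV → Bool) → (Fin bV → Bool) → Finset (Fin bE → Bool) → Bool,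
          ∀ G : SimpleGraph (Fin n),
            ∃ (N : ℕ) (μ : Fin N → ℝ)
              (LV : Fin N → Fin n → Fin bV → Bool)
              (LE : Fin N → Sym2 (Fin n) → Fin bE → Bool),
              (∀ ω, 0 ≤ μ ω) ∧ (∑ ω, μ ω = 1) ∧
              ∀ (s t : Fin n) (F : Finset (Sym2 (Fin n))),
                (↑F : Set (Sym2 (Fin n))) ⊆ G.edgeSet → F.card ≤ f →
                1 - (n : ℝ) ^ (-c) ≤
                  ∑ ω ∈ Finset.univ.filter (fun ω =>
                      (D (LV ω s) (LV ω t) (F.image (LE ω)) = true ↔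
                        (G.deleteEdges (↑F : Set (Sym2 (Fin n)))).Reachable s t)),
                    μ ω := by
  intro c _
  refine ⟨2 * (⌈c⌉₊ + 7), fun n f hn _ => ?_⟩
  have : NeZero n := ⟨by omega⟩
  set L := Nat.clog 2 n
  have hL : n ≤ 2 ^ L := Nat.le_pow_clog one_lt_two n
  have hlog : (L : ℝ) ≤ 2 * Real.logb 2 n := clog_le_two_mul_logb hn
  let b := f + ⌈c⌉₊ * L
  obtain ⟨encV, decV, hV⟩ := exists_code (card_position_le hn hL)
  obtain ⟨encE, decE, hE⟩ := exists_code (card_edgeLabel_le hn hL b)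
  refine ⟨3 * L, b + 7 * L, ?_, ?_, fun p q S => decide (Connects (fun y => (decE y).1)
    (fun y => (decE y).2.1) (decV p) (decV q) S), fun G => ?_⟩
  · push_cast
    nlinarith
  · simp only [b]
    push_cast
    nlinarith
  obtain ⟨pos, str, hG⟩ := exists_isTourLabeling G
  obtain ⟨N, μ, X, hμ, hsum, hsuccess⟩ := exists_uniform_weights (Fin b → cycleSpace G)
  refine ⟨N, μ, fun _ v => encV (pos v), fun i e => encE (edgeSketch (X i) e, str e, e), hμ, hsum,
    fun s t F _ hF => ?_⟩
  have hinj (i) : Function.Injective fun e => encE (edgeSketch (X i) e, str e, e) := fun e e' h =>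
    (Prod.ext_iff.1 (Prod.ext_iff.1 (hE.injective h)).2).2
  simp only [decide_eq_true_iff, connects_image (hinj _), Function.comp_def, hV _, hE _]
  refine (sub_le_sub_left (inv_two_pow_le_rpow_neg c (by omega) hL) 1).trans ?_
  convert hsuccess _ (2 ^ (⌈c⌉₊ * L)) (by positivity)
    (hG.two_pow_mul_card_failure_le_card s t hF (⌈c⌉₊ * L))
end
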